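/- For every b > 0 there exists a constant c_b > 0 such that for all n ≥ 1, every non-empty A ⊆ G_n with |A| ≤ b·ln(N_n) and every good vertex x ∈ G_A at the boundary of A, one has | E_x^{G_n}[H_A] / E_π^{G_n}[H_A] − P_x^{G_n}[ H_A > T_{F_A(x,s_n)} ] | ≤ c_b·(ln(N_n))^{−3}, where E_π^{G_n} is the expectation for simple random walk on G_n started from the uniform distribution on the vertices of G_n. -/

import Mathlib

open MeasureTheory ProbabilityTheory Filter Set
open scoped ENNReal NNReal ENat Classical

namespace GFF

variable {V : Type*} {T : Type*}

/-- Number of ordered adjacent pairs inside `U` (twice the number of edges of the induced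
subgraph). -/
noncomputable def adjPairs (G : SimpleGraph V) (U : Set V) : ℕ :=
  Set.ncard {p : V × V | p.1 ∈ U ∧ p.2 ∈ U ∧ G.Adj p.1 p.2}

/-- `U` (assumed connected) induces a tree, i.e. has tree excess zero. -/
def TxZero (G : SimpleGraph V) (U : Set V) : Prop :=
  adjPairs G U = 2 * (Set.ncard U - 1)

/-- Closed ball of radius `R` for the graph distance. -/
def gball (G : SimpleGraph V) (x : V) (R : ℕ) : Set V := {y | G.dist x y ≤ R}

/-- Set of vertices within distance `R` of the set `A`. -/
def sball (G : SimpleGraph V) (A : Set V) (R : ℕ) : Set V := {y | ∃ a ∈ A, G.dist a y ≤ R}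

/-- Connected component containing `x` of the level set `{ω ≥ h}`. -/
def levelComp (G : SimpleGraph V) (h : ℝ) (ω : V → ℝ) (x : V) : Set V :=
  {y | ∃ p : G.Walk x y, ∀ v ∈ p.support, h ≤ ω v}

/-- `G` is `d`-regular. -/
def IsReg (G : SimpleGraph V) (d : ℕ) : Prop := ∀ v, Nat.card (G.neighborSet v) = d

/-- `G` is an infinite `d`-regular tree. -/
def IsRegTree (G : SimpleGraph V) (d : ℕ) : Prop :=
  G.Connected ∧ G.IsAcyclic ∧ IsReg G d

/-- Transition matrix of SRW on a `d`-regular graph. -/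
noncomputable def transP [Fintype V] (G : SimpleGraph V) (d : ℕ) : Matrix V V ℝ :=
  Matrix.of fun u v => if G.Adj u v then ((d : ℝ))⁻¹ else 0

/-- All non-zero eigenvalues of `I - P` are at least `β`. -/
def SpectralGapLB [Fintype V] (G : SimpleGraph V) (d : ℕ) (β : ℝ) : Prop :=
  ∀ (f : V → ℝ) (lam : ℝ),
    Matrix.mulVec ((1 : Matrix V V ℝ) - transP G d) f = lam • f → f ≠ 0 → lam = 0 ∨ β ≤ lam

/-- `P_x[X̄_t = y]` for the continuous-time SRW with i.i.d. mean-one exponential holding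
times (Poissonized jump chain). -/
noncomputable def heatK [Fintype V] (G : SimpleGraph V) (d : ℕ) (t : ℝ) (x y : V) : ℝ :=
  ∑' k : ℕ, Real.exp (-t) * t ^ k / (Nat.factorial k) * ((transP G d) ^ k) x y

/-- The zero-average Green function. -/
noncomputable def zGreen [Fintype V] (G : SimpleGraph V) (d Nn : ℕ) (x y : V) : ℝ :=
  ∫ t in Set.Ioi (0 : ℝ), (heatK G d t x y - 1 / (Nn : ℝ))

/-- Green function of SRW on the `d`-regular tree. -/
noncomputable def treeGreen (G : SimpleGraph V) (d : ℕ) (x y : V) : ℝ :=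
  (((d : ℝ) - 1) / ((d : ℝ) - 2)) * (((d : ℝ) - 1)⁻¹) ^ (G.dist x y)

/-- `μ` is the law of the centred Gaussian field with covariance `K`. -/
def IsGaussianField {I : Type*} (μ : Measure (I → ℝ)) (K : I → I → ℝ) : Prop :=
  IsProbabilityMeasure μ ∧
    ∀ c : I →₀ ℝ,
      μ.map (fun ω => ∑ i ∈ c.support, c i * ω i) =
        gaussianReal 0 (Real.toNNReal (∑ i ∈ c.support, ∑ j ∈ c.support, c i * c j * K i j))

/-- One-step transition probability of SRW. -/
noncomputable def srwStep (G : SimpleGraph V) (d : ℕ) (u v : V) : ℝ≥0∞ :=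
  if G.Adj u v then (d : ℝ≥0∞)⁻¹ else 0

/-- `W x` is the law of discrete-time SRW on `G` started at `x`. -/
def IsSRW [MeasurableSpace V] (G : SimpleGraph V) (d : ℕ) (W : V → Measure (ℕ → V)) : Prop :=
  (∀ x, IsProbabilityMeasure (W x)) ∧
    ∀ (x : V) (k : ℕ) (p : ℕ → V),
      W x {ω | ∀ i ≤ k, ω i = p i} =
        (if p 0 = x then 1 else 0) * ∏ i ∈ Finset.range k, srwStep G d (p i) (p (i + 1))

/-- Entrance time of the set `A` (`⊤` if never entered). -/
noncomputable def hitTime (A : Set V) (ω : ℕ → V) : ℕ∞ :=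
  sInf ((Nat.cast : ℕ → ℕ∞) '' {k | ω k ∈ A})

/-- Exit time of the set `U`. -/
noncomputable def exitTime (U : Set V) (ω : ℕ → V) : ℕ∞ := hitTime Uᶜ ω

/-- Position of the walk at the entrance time of `A`. -/
noncomputable def stopAt (A : Set V) (ω : ℕ → V) : V := ω (hitTime A ω).toNat

/-- `π` is a cover tree of `G` at `x`. -/
def IsCoverMap (Gt : SimpleGraph T) (G : SimpleGraph V) (o : T) (x : V) (π : T → V) : Prop :=
  π o = x ∧ Function.Surjective π ∧ ∀ y : T, π '' (Gt.neighborSet y) = G.neighborSet (π y)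

/-- `T_d^+`: the vertices of the tree whose geodesic to `o` avoids the fixed neighbour
`obar` of `o`. -/
def treePlus (Gt : SimpleGraph T) (o obar : T) : Set T :=
  {z | Gt.dist z obar = Gt.dist z o + 1}

/-- `S^+_{T_d}(o,R)`. -/
def spherePlus (Gt : SimpleGraph T) (o obar : T) (R : ℕ) : Set T :=
  {z | z ∈ treePlus Gt o obar ∧ Gt.dist o z = R}

/-- The critical value for level-set percolation on the tree (w.r.t. the law `μT`). -/
noncomputable def hstar (Gt : SimpleGraph T) (o : T) (μT : Measure (T → ℝ)) : ℝ :=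
  sInf {h : ℝ | μT {ω | (levelComp Gt h ω o).Infinite} = 0}

/-- The forward percolation probability `η⁺(h)`. -/
noncomputable def etaPlus (Gt : SimpleGraph T) (o obar : T) (μT : Measure (T → ℝ)) (h : ℝ) :
    ℝ :=
  (μT {ω | (levelComp Gt h ω o ∩ treePlus Gt o obar).Infinite}).toReal

/-- `s_n`. -/
noncomputable def sn (d Nn : ℕ) : ℕ :=
  max 1 ⌊(8 : ℝ) * Real.logb ((d : ℝ) - 1) (Real.logb ((d : ℝ) - 1) (Nn : ℝ))⌋₊

/-- `c₀ = αβ/(d-1)`. -/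
noncomputable def c0 (d : ℕ) (α β : ℝ) : ℝ := α * β / ((d : ℝ) - 1)

/-- `r_n`. -/
noncomputable def rn (d : ℕ) (α β : ℝ) (Nn : ℕ) : ℕ :=
  max 1 ⌊(c0 d α β / 18) * Real.logb ((d : ℝ) - 1) (Nn : ℝ)⌋₊

/-- `R_n`. -/
noncomputable def Rn (d : ℕ) (α β : ℝ) (Nn : ℕ) : ℕ :=
  max 1 ⌊(c0 d α β / 6) * Real.logb ((d : ℝ) - 1) (Nn : ℝ)⌋₊

/-- `F_A(x,s)`: the vertices of `B(A,s) ∖ A` connected to `x` within `B(A,s) ∖ A`. -/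
def Fset (G : SimpleGraph V) (A : Set V) (s : ℕ) (x : V) : Set V :=
  {z | ∃ p : G.Walk x z, ∀ v ∈ p.support, v ∈ sball G A s ∧ v ∉ A}

/-- Good vertex at the boundary of `A`. -/
def GoodVertex (G : SimpleGraph V) (A : Set V) (s : ℕ) (x : V) : Prop :=
  x ∉ A ∧ (∃! y, y ∈ A ∧ G.Adj x y) ∧
    TxZero G (Fset G A s x) ∧
    ∀ y : V, y ∉ A → (∃ a ∈ A, G.Adj y a) → y ≠ x →
      ∀ p : G.Walk y x, (∀ v ∈ p.support, v ∉ A) → ∃ v ∈ p.support, v ∉ sball G A s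

end GFF

namespace GFF

section ops
variable {V : Type*} [Fintype V]

noncomputable def Pop (G : SimpleGraph V) (d : ℕ) (f : V → ℝ) (z : V) : ℝ :=
  ∑ y, (if G.Adj z y then ((d : ℝ))⁻¹ else 0) * f y

lemma row_sum (G : SimpleGraph V) (d : ℕ) (hd : 3 ≤ d) (hreg : IsReg G d) (z : V) :
    ∑ y, (if G.Adj z y then ((d : ℝ))⁻¹ else 0) = 1 := by
  have h := hreg z
  have h2 : Nat.card (G.neighborSet z) = (Finset.univ.filter (fun y => G.Adj z y)).card := by
    rw [Nat.card_eq_fintype_card, Fintype.card_subtype]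
    congr 1
  rw [← Finset.sum_filter, Finset.sum_const, ← h2, h]
  have : (d : ℝ) ≠ 0 := by positivity
  simp [this]

lemma Pop_add (G : SimpleGraph V) (d : ℕ) (f g : V → ℝ) (z : V) :
    Pop G d (fun v => f v + g v) z = Pop G d f z + Pop G d g z := by
  simp [Pop, mul_add, Finset.sum_add_distrib]

lemma Pop_sub (G : SimpleGraph V) (d : ℕ) (f g : V → ℝ) (z : V) :
    Pop G d (fun v => f v - g v) z = Pop G d f z - Pop G d g z := by
  simp [Pop, mul_sub, Finset.sum_sub_distrib]

lemma Pop_smul (G : SimpleGraph V) (d : ℕ) (c : ℝ) (f : V → ℝ) (z : V) :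
    Pop G d (fun v => c * f v) z = c * Pop G d f z := by
  simp only [Pop, Finset.mul_sum]
  exact Finset.sum_congr rfl fun y _ => by ring

lemma Pop_const (G : SimpleGraph V) (d : ℕ) (hd : 3 ≤ d) (hreg : IsReg G d) (c : ℝ) (z : V) :
    Pop G d (fun _ => c) z = c := by
  simp only [Pop]
  rw [← Finset.sum_mul, row_sum G d hd hreg, one_mul]

lemma coef_nonneg (G : SimpleGraph V) (d : ℕ) (z y : V) :
    0 ≤ (if G.Adj z y then ((d : ℝ))⁻¹ else 0) := by
  split_ifs <;> positivity

lemma Pop_mono_adj (G : SimpleGraph V) (d : ℕ) (f g : V → ℝ) (z : V)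
    (h : ∀ y, G.Adj z y → f y ≤ g y) : Pop G d f z ≤ Pop G d g z := by
  apply Finset.sum_le_sum
  intro y _
  by_cases hy : G.Adj z y
  · simp only [hy, if_true]
    exact mul_le_mul_of_nonneg_left (h y hy) (by positivity)
  · simp [hy]

lemma Pop_symm (G : SimpleGraph V) (d : ℕ) (f g : V → ℝ) :
    ∑ z, g z * Pop G d f z = ∑ z, f z * Pop G d g z := by
  simp only [Pop, Finset.mul_sum]
  rw [Finset.sum_comm]
  refine Finset.sum_congr rfl fun y _ => Finset.sum_congr rfl fun z _ => ?_
  simp only [G.adj_comm z y]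
  ring

lemma Pop_sum (G : SimpleGraph V) (d : ℕ) (hd : 3 ≤ d) (hreg : IsReg G d) (f : V → ℝ) :
    ∑ z, Pop G d f z = ∑ z, f z := by
  have := Pop_symm G d f (fun _ => 1)
  simpa [Pop_const G d hd hreg] using this

lemma Pop_sq_le (G : SimpleGraph V) (d : ℕ) (hd : 3 ≤ d) (hreg : IsReg G d) (f : V → ℝ) :
    ∑ z, (Pop G d f z) ^ 2 ≤ ∑ z, f z ^ 2 := by
  rw [← Pop_sum G d hd hreg (fun z => f z ^ 2)]
  apply Finset.sum_le_sum
  intro z _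
  have h : Pop G d (fun v => (f v - Pop G d f z) ^ 2) z
      = Pop G d (fun v => f v ^ 2) z - (Pop G d f z) ^ 2 := by
    have e : (fun v => (f v - Pop G d f z) ^ 2)
        = fun v => (f v ^ 2 - (2 * Pop G d f z) * f v) + (fun _ => Pop G d f z ^ 2) v := by
      funext v; ring
    rw [e, Pop_add, Pop_sub, Pop_smul, Pop_const G d hd hreg]; ring
  have h0 : 0 ≤ Pop G d (fun v => (f v - Pop G d f z) ^ 2) z := by
    apply Finset.sum_nonneg
    intro y _
    exact mul_nonneg (coef_nonneg G d z y) (sq_nonneg _)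
  linarith

/-- S2 -/
lemma lap_sq_le (G : SimpleGraph V) (d : ℕ) (hd : 3 ≤ d) (hreg : IsReg G d) (f : V → ℝ) :
    ∑ z, (f z - Pop G d f z) ^ 2 ≤ 2 * ∑ z, f z * (f z - Pop G d f z) := by
  have h := Pop_sq_le G d hd hreg f
  have e1 : ∑ z, (f z - Pop G d f z) ^ 2
      = ∑ z, f z ^ 2 - 2 * ∑ z, f z * Pop G d f z + ∑ z, Pop G d f z ^ 2 := by
    rw [Finset.mul_sum, ← Finset.sum_sub_distrib, ← Finset.sum_add_distrib]
    exact Finset.sum_congr rfl fun z _ => by ring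
  have e2 : ∑ z, f z * (f z - Pop G d f z) = ∑ z, f z ^ 2 - ∑ z, f z * Pop G d f z := by
    rw [← Finset.sum_sub_distrib]
    exact Finset.sum_congr rfl fun z _ => by ring
  rw [e1, e2]; linarith

lemma lap_eq_mulVec (G : SimpleGraph V) (d : ℕ) (f : V → ℝ) (z : V) :
    Matrix.mulVec ((1 : Matrix V V ℝ) - transP G d) f z = f z - Pop G d f z := by
  rw [Matrix.sub_mulVec, Matrix.one_mulVec]
  rfl

/-- Dirichlet form. -/
lemma dirichlet (G : SimpleGraph V) (d : ℕ) (hd : 3 ≤ d) (hreg : IsReg G d) (f : V → ℝ) :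
    2 * ∑ z, f z * (f z - Pop G d f z)
      = ∑ z, ∑ y, (if G.Adj z y then ((d : ℝ))⁻¹ else 0) * (f z - f y) ^ 2 := by
  have h1 : ∀ z, ∑ y, (if G.Adj z y then ((d : ℝ))⁻¹ else 0) * (f z - f y) ^ 2
      = f z ^ 2 - 2 * (f z * Pop G d f z) + Pop G d (fun v => f v ^ 2) z := by
    intro z
    have e : f z ^ 2 = ∑ y, (if G.Adj z y then ((d : ℝ))⁻¹ else 0) * f z ^ 2 := by
      rw [← Finset.sum_mul, row_sum G d hd hreg, one_mul]
    rw [e]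
    simp only [Pop, Finset.mul_sum]
    rw [← Finset.sum_sub_distrib, ← Finset.sum_add_distrib]
    exact Finset.sum_congr rfl fun y _ => by ring
  simp only [h1]
  rw [Finset.sum_add_distrib, Pop_sum G d hd hreg, Finset.sum_sub_distrib, ← Finset.mul_sum]
  have e2 : ∑ z, f z * (f z - Pop G d f z) = ∑ z, f z ^ 2 - ∑ z, f z * Pop G d f z := by
    rw [← Finset.sum_sub_distrib]
    exact Finset.sum_congr rfl fun z _ => by ring
  rw [e2]; ring

lemma const_of_lap_zero (G : SimpleGraph V) (d : ℕ) (hd : 3 ≤ d) (hreg : IsReg G d)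
    (hconn : G.Connected) (f : V → ℝ) (h : ∑ z, f z * (f z - Pop G d f z) = 0) (u v : V) :
    f u = f v := by
  have hD := dirichlet G d hd hreg f
  rw [h, mul_zero] at hD
  have hnn : ∀ z y, 0 ≤ (if G.Adj z y then ((d : ℝ))⁻¹ else 0) * (f z - f y) ^ 2 :=
    fun z y => mul_nonneg (coef_nonneg G d z y) (sq_nonneg _)
  have hadj : ∀ z y, G.Adj z y → f z = f y := by
    intro z y hzy
    have h1 := (Finset.sum_eq_zero_iff_of_nonneg
      (fun z _ => Finset.sum_nonneg fun y _ => hnn z y)).1 hD.symm z (Finset.mem_univ z)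
    have h2 := (Finset.sum_eq_zero_iff_of_nonneg (fun y _ => hnn z y)).1 h1 y (Finset.mem_univ y)
    simp only [hzy, if_true] at h2
    have : (d : ℝ)⁻¹ ≠ 0 := by positivity
    have h3 := (mul_eq_zero.1 h2).resolve_left this
    have := pow_eq_zero_iff (two_ne_zero) |>.1 h3
    linarith
  obtain ⟨p⟩ := hconn.preconnected u v
  induction p with
  | nil => rfl
  | cons hh _ ih => exact (hadj _ _ hh).trans ih

/-- S3: Poincare inequality. -/
lemma poincare (G : SimpleGraph V) (d : ℕ) (hd : 3 ≤ d) (hreg : IsReg G d)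
    (hconn : G.Connected) (β : ℝ) (hgap : SpectralGapLB G d β) (f : V → ℝ)
    (hf : ∑ z, f z = 0) :
    β * ∑ z, f z ^ 2 ≤ ∑ z, f z * (f z - Pop G d f z) := by
  set M : Matrix V V ℝ := (1 : Matrix V V ℝ) - transP G d with hM
  have hH : M.IsHermitian := by
    ext i j
    simp [hM, transP, Matrix.one_apply, G.adj_comm i j, eq_comm]
  set bs := hH.eigenvectorBasis with hbs
  set x : EuclideanSpace ℝ V := WithLp.toLp 2 f with hx
  have hMv : ∀ i, Matrix.mulVec M (bs i).ofLp = hH.eigenvalues i • (bs i).ofLp :=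
    fun i => hH.mulVec_eigenvectorBasis i
  have hn : ∑ z, f z ^ 2 = ∑ i, (inner ℝ (bs i) x) ^ 2 := by
    have := bs.sum_sq_norm_inner_right x
    rw [EuclideanSpace.norm_sq_eq] at this
    simp only [Real.norm_eq_abs, sq_abs] at this
    rw [this]
  have hq : ∑ z, f z * (f z - Pop G d f z)
      = ∑ i, hH.eigenvalues i * (inner ℝ (bs i) x) ^ 2 := by
    set y : EuclideanSpace ℝ V := WithLp.toLp 2 (Matrix.mulVec M f) with hy
    have h1 : ∑ z, f z * (f z - Pop G d f z) = inner ℝ x y := by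
      simp only [PiLp.inner_apply, hx, hy]
      refine Finset.sum_congr rfl fun z _ => ?_
      rw [lap_eq_mulVec]
      simp [mul_comm]
    rw [h1, ← bs.sum_inner_mul_inner x y]
    refine Finset.sum_congr rfl fun i _ => ?_
    have h2 : inner ℝ (bs i) y = hH.eigenvalues i * inner ℝ (bs i) x := by
      have : inner ℝ (bs i) y = (bs i).ofLp ⬝ᵥ (Matrix.mulVec M f) := by
        simp [PiLp.inner_apply, dotProduct, hy, mul_comm]
      rw [this, Matrix.dotProduct_mulVec, ← Matrix.mulVec_transpose]
      have hT : M.transpose = M := by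
        have := hH.eq
        rwa [Matrix.conjTranspose_eq_transpose_of_trivial] at this
      rw [hT, hMv i]
      simp [PiLp.inner_apply, dotProduct, hx, Finset.mul_sum, mul_comm, mul_left_comm]
    rw [h2, real_inner_comm]; ring
  rw [hn, hq, Finset.mul_sum]
  apply Finset.sum_le_sum
  intro i _
  have hne : (bs i).ofLp ≠ 0 := by
    intro h0
    have h1 := bs.orthonormal.1 i
    have : bs i = 0 := by ext z; exact congrFun h0 z
    rw [this] at h1; simp at h1
  rcases hgap _ _ (hMv i) hne with h0 | h0
  · have hc : ∀ u v, (bs i).ofLp u = (bs i).ofLp v := by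
      apply const_of_lap_zero G d hd hreg hconn
      apply Finset.sum_eq_zero
      intro z _
      rw [← lap_eq_mulVec, hMv i, h0]; simp
    have : inner ℝ (bs i) x = 0 := by
      simp only [PiLp.inner_apply]
      obtain ⟨z0⟩ := hconn.nonempty
      have : ∀ z, inner ℝ ((bs i).ofLp z) (x.ofLp z) = (bs i).ofLp z0 * f z := by
        intro z
        rw [hc z0 z]; simp [hx, mul_comm]
      simp only [this]
      rw [← Finset.mul_sum, hf, mul_zero]
    rw [this]; simp
  · exact mul_le_mul_of_nonneg_right h0 (sq_nonneg _)

end ops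
end GFF

namespace GFF

section radial
variable {V : Type*} [Fintype V]

lemma dist_adj_le (G : SimpleGraph V) (hconn : G.Connected) (a z y : V) (h : G.Adj z y) :
    G.dist a y ≤ G.dist a z + 1 := by
  have := hconn.dist_triangle (u := a) (v := z) (w := y)
  rwa [SimpleGraph.dist_eq_one_iff_adj.2 h] at this

noncomputable def nlow (G : SimpleGraph V) (a u : V) : ℕ :=
  (Finset.univ.filter (fun v => G.Adj u v ∧ G.dist a v < G.dist a u)).card

noncomputable def nsib (G : SimpleGraph V) (a u : V) : ℕ :=
  (Finset.univ.filter (fun v => G.Adj u v ∧ G.dist a v = G.dist a u)).card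

lemma nlow_pos (G : SimpleGraph V) (hconn : G.Connected) (a u : V) (h : u ≠ a) :
    1 ≤ nlow G a u := by
  obtain ⟨p, hp⟩ := hconn.exists_walk_length_eq_dist u a
  cases p with
  | nil => exact absurd rfl h
  | @cons _ v _ hadj q =>
    apply Finset.card_pos.2
    refine ⟨v, ?_⟩
    simp only [Finset.mem_filter, Finset.mem_univ, true_and]
    refine ⟨hadj, ?_⟩
    have h1 : G.dist v a ≤ q.length := SimpleGraph.dist_le q
    rw [SimpleGraph.Walk.length_cons] at hp
    rw [SimpleGraph.dist_comm, G.dist_comm (u := a)]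
    omega

lemma adjPairs_eq (G : SimpleGraph V) (a : V) (R : ℕ) :
    adjPairs G (gball G a R)
      = ∑ u ∈ Finset.univ.filter (fun u => G.dist a u ≤ R), (2 * nlow G a u + nsib G a u) := by
  set B := Finset.univ.filter (fun u => G.dist a u ≤ R) with hB
  have hBm : ∀ u, u ∈ B ↔ G.dist a u ≤ R := by intro u; simp [hB]
  have e0 : adjPairs G (gball G a R)
      = (Finset.univ.filter (fun p : V × V => p.1 ∈ B ∧ p.2 ∈ B ∧ G.Adj p.1 p.2)).card := by
    unfold adjPairs
    rw [← Set.ncard_coe_finset]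
    congr 1
    ext p
    simp [gball, hBm]
  have e1 : (Finset.univ.filter (fun p : V × V => p.1 ∈ B ∧ p.2 ∈ B ∧ G.Adj p.1 p.2)).card
      = ∑ p : V × V, if p.1 ∈ B ∧ p.2 ∈ B ∧ G.Adj p.1 p.2 then 1 else 0 := by
    rw [Finset.card_filter]
  have e2 : ∀ (p : V × V), (if p.1 ∈ B ∧ p.2 ∈ B ∧ G.Adj p.1 p.2 then 1 else 0)
      = (if p.1 ∈ B ∧ G.Adj p.1 p.2 ∧ G.dist a p.2 < G.dist a p.1 then 1 else 0)
      + (if p.2 ∈ B ∧ G.Adj p.2 p.1 ∧ G.dist a p.1 < G.dist a p.2 then 1 else 0)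
      + (if p.1 ∈ B ∧ G.Adj p.1 p.2 ∧ G.dist a p.2 = G.dist a p.1 then 1 else 0) := by
    intro p
    simp only [hBm, G.adj_comm p.2 p.1]
    by_cases hadj : G.Adj p.1 p.2
    · simp only [hadj, true_and, and_true]
      split_ifs <;> omega
    · simp [hadj]
  have e3 : ∑ p : V × V, (if p.1 ∈ B ∧ G.Adj p.1 p.2 ∧ G.dist a p.2 < G.dist a p.1 then 1 else 0)
      = ∑ u ∈ B, nlow G a u := by
    rw [Fintype.sum_prod_type, ← Finset.sum_filter_add_sum_filter_not Finset.univ (fun u => u ∈ B)]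
    have : Finset.univ.filter (fun u => u ∈ B) = B := by ext; simp
    rw [this]
    have hz : ∑ u ∈ Finset.univ.filter (fun u => u ∉ B), ∑ v : V,
        (if u ∈ B ∧ G.Adj u v ∧ G.dist a v < G.dist a u then 1 else 0) = 0 := by
      apply Finset.sum_eq_zero
      intro u hu
      simp only [Finset.mem_filter, Finset.mem_univ, true_and] at hu
      simp [hu]
    rw [hz, add_zero]
    refine Finset.sum_congr rfl fun u hu => ?_
    rw [nlow, Finset.card_filter]
    simp [hu]
  have e4 : ∑ p : V × V, (if p.1 ∈ B ∧ G.Adj p.1 p.2 ∧ G.dist a p.2 = G.dist a p.1 then 1 else 0)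
      = ∑ u ∈ B, nsib G a u := by
    rw [Fintype.sum_prod_type, ← Finset.sum_filter_add_sum_filter_not Finset.univ (fun u => u ∈ B)]
    have : Finset.univ.filter (fun u => u ∈ B) = B := by ext; simp
    rw [this]
    have hz : ∑ u ∈ Finset.univ.filter (fun u => u ∉ B), ∑ v : V,
        (if u ∈ B ∧ G.Adj u v ∧ G.dist a v = G.dist a u then 1 else 0) = 0 := by
      apply Finset.sum_eq_zero
      intro u hu
      simp only [Finset.mem_filter, Finset.mem_univ, true_and] at hu
      simp [hu]
    rw [hz, add_zero]
    refine Finset.sum_congr rfl fun u hu => ?_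
    rw [nsib, Finset.card_filter]
    simp [hu]
  have e5 : ∑ p : V × V, (if p.2 ∈ B ∧ G.Adj p.2 p.1 ∧ G.dist a p.1 < G.dist a p.2 then 1 else 0)
      = ∑ p : V × V, (if p.1 ∈ B ∧ G.Adj p.1 p.2 ∧ G.dist a p.2 < G.dist a p.1 then 1 else 0) :=
    Fintype.sum_equiv (Equiv.prodComm V V) _ _ (fun p => rfl)
  rw [e0, e1, Finset.sum_congr rfl (fun p _ => e2 p), Finset.sum_add_distrib,
    Finset.sum_add_distrib, e5, e3, e4, Finset.sum_add_distrib, ← Finset.mul_sum]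
  ring

/-- structure of the BFS levels in a ball with at most one cycle -/
lemma levels (G : SimpleGraph V) (hconn : G.Connected) (a : V) (R : ℕ)
    (hc : adjPairs G (gball G a R) ≤ 2 * (gball G a R).ncard) :
    ∃ m, (m = 0 ∨ m < R) ∧ ∀ u, u ≠ a → G.dist a u < R →
      nlow G a u + nsib G a u ≤ 1 ∨ (nlow G a u + nsib G a u ≤ 2 ∧ G.dist a u = m) := by
  set B := Finset.univ.filter (fun u => G.dist a u ≤ R) with hB
  have hBm : ∀ u, u ∈ B ↔ G.dist a u ≤ R := by intro u; simp [hB]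
  have hcard : (gball G a R).ncard = B.card := by
    rw [← Set.ncard_coe_finset]; congr 1; ext u; simp [gball, hBm]
  rw [adjPairs_eq, hcard, ← hB] at hc
  set e : V → ℕ := fun u => 2 * (nlow G a u - 1) + nsib G a u with he
  have haB : a ∈ B := by simp [hBm]
  have hsum : ∑ u ∈ B.erase a, e u ≤ 2 := by
    have h1 : ∑ u ∈ B.erase a, (2 * nlow G a u + nsib G a u)
        = ∑ u ∈ B.erase a, (e u + 2) := by
      refine Finset.sum_congr rfl fun u hu => ?_
      have := nlow_pos G hconn a u (Finset.ne_of_mem_erase hu)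
      simp only [he]; omega
    have h2 := Finset.sum_erase_add B (fun u => 2 * nlow G a u + nsib G a u) haB
    rw [h1, Finset.sum_add_distrib, Finset.sum_const, Finset.card_erase_of_mem haB] at h2
    have hpos : 0 < B.card := Finset.card_pos.2 ⟨a, haB⟩
    simp only [smul_eq_mul] at h2
    omega
  have hone : ∀ u, u ≠ a → u ∈ B → e u ≤ 2 := fun u hu huB =>
    (Finset.single_le_sum (f := e) (fun _ _ => Nat.zero_le _) (Finset.mem_erase.2 ⟨hu, huB⟩)).trans hsum
  have htwo : ∀ u w, u ≠ a → w ≠ a → u ≠ w → u ∈ B → w ∈ B → e u + e w ≤ 2 := by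
    intro u w hu hw huw huB hwB
    rw [← Finset.sum_pair huw]
    refine (Finset.sum_le_sum_of_subset ?_).trans hsum
    intro z hz
    simp only [Finset.mem_insert, Finset.mem_singleton] at hz
    rcases hz with rfl | rfl <;> exact Finset.mem_erase.2 ⟨by assumption, by assumption⟩
  have hthree : ∀ u w x, u ≠ a → w ≠ a → x ≠ a → u ≠ w → u ≠ x → w ≠ x → u ∈ B → w ∈ B → x ∈ B →
      e u + (e w + e x) ≤ 2 := by
    intro u w x hu hw hx huw hux hwx huB hwB hxB
    have : ∑ z ∈ ({u, w, x} : Finset V), e z = e u + (e w + e x) := by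
      rw [Finset.sum_insert (by simp [huw, hux]), Finset.sum_pair hwx]
    rw [← this]
    refine (Finset.sum_le_sum_of_subset ?_).trans hsum
    intro z hz
    simp only [Finset.mem_insert, Finset.mem_singleton] at hz
    rcases hz with rfl | rfl | rfl <;> exact Finset.mem_erase.2 ⟨by assumption, by assumption⟩
  have hsibex : ∀ u, u ≠ a → u ∈ B → 1 ≤ nsib G a u →
      ∃ w, w ≠ a ∧ w ≠ u ∧ w ∈ B ∧ 1 ≤ nsib G a w ∧ G.dist a w = G.dist a u := by
    intro u hu huB h
    obtain ⟨w, hw⟩ := Finset.card_pos.1 h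
    simp only [Finset.mem_filter, Finset.mem_univ, true_and] at hw
    refine ⟨w, ?_, hw.1.ne', ?_, ?_, hw.2⟩
    · rintro rfl
      have := hw.2
      rw [SimpleGraph.dist_self] at this
      exact hu ((hconn.dist_eq_zero_iff).1 this.symm).symm
    · rw [hBm, hw.2]; exact (hBm u).1 huB
    · apply Finset.card_pos.2
      exact ⟨u, by simp [hw.1.symm, hw.2]⟩
  have hle2 : ∀ u, u ≠ a → u ∈ B → nlow G a u + nsib G a u ≤ 2 := by
    intro u hu huB
    have h1 := hone u hu huB
    have h0 := nlow_pos G hconn a u hu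
    by_cases hs : 1 ≤ nsib G a u
    · obtain ⟨w, hwa, hwu, hwB, hws, _⟩ := hsibex u hu huB hs
      have := htwo u w hu hwa hwu.symm huB hwB
      simp only [he] at this
      omega
    · simp only [he] at h1; omega
  have hsame : ∀ u u', u ≠ a → u' ≠ a → u ∈ B → u' ∈ B → 2 ≤ nlow G a u + nsib G a u →
      2 ≤ nlow G a u' + nsib G a u' → G.dist a u = G.dist a u' := by
    intro u u' hu hu' huB hu'B h2 h2'
    by_contra hne
    have huu : u ≠ u' := by rintro rfl; exact hne rfl
    have h3 := htwo u u' hu hu' huu huB hu'B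
    have h0 := nlow_pos G hconn a u hu
    have h0' := nlow_pos G hconn a u' hu'
    by_cases hs : 1 ≤ nsib G a u
    · obtain ⟨w, hwa, hwu, hwB, hws, hwd⟩ := hsibex u hu huB hs
      have hwu' : w ≠ u' := by rintro rfl; exact hne hwd.symm
      have := hthree u w u' hu hwa hu' hwu.symm huu hwu' huB hwB hu'B
      simp only [he] at this
      omega
    · simp only [he] at h3; omega
  by_cases hex : ∃ u, u ≠ a ∧ G.dist a u < R ∧ 2 ≤ nlow G a u + nsib G a u
  · obtain ⟨u, hu, huR, hu2⟩ := hex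
    refine ⟨G.dist a u, Or.inr huR, ?_⟩
    intro v hv hvR
    by_cases h : nlow G a v + nsib G a v ≤ 1
    · exact Or.inl h
    · right
      refine ⟨hle2 v hv ((hBm v).2 hvR.le), ?_⟩
      exact hsame v u hv hu ((hBm v).2 hvR.le) ((hBm u).2 huR.le) (by omega) hu2
  · refine ⟨0, Or.inl rfl, ?_⟩
    intro v hv hvR
    left
    by_contra h
    exact hex ⟨v, hv, hvR, by omega⟩

lemma Pop_radial_le (G : SimpleGraph V) (d : ℕ) (hd : 3 ≤ d) (hreg : IsReg G d)
    (hconn : G.Connected) (a z : V) (f : ℕ → ℝ) (hf : Antitone f) (T : ℕ)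
    (hT : nlow G a z + nsib G a z ≤ T) :
    d * Pop G d (fun y => f (G.dist a y)) z ≤
      T * f (G.dist a z - 1) + (d - T) * f (G.dist a z + 1) := by
  set j := G.dist a z with hj
  have hd0 : (d : ℝ) ≠ 0 := by positivity
  have h1 : Pop G d (fun y => f (G.dist a y)) z ≤
      Pop G d (fun y => if G.dist a y ≤ j then f (j - 1) else f (j + 1)) z := by
    apply Pop_mono_adj
    intro y hy
    have hy1 := dist_adj_le G hconn a y z hy.symm
    have hy2 := dist_adj_le G hconn a z y hy
    split_ifs with h
    · exact hf (by omega)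
    · exact hf (by omega)
  have h2 : Pop G d (fun y => if G.dist a y ≤ j then f (j - 1) else f (j + 1)) z
      = Pop G d (fun y => f (j + 1) + (f (j - 1) - f (j + 1)) * (if G.dist a y ≤ j then 1 else 0)) z := by
    congr 1; funext y; split_ifs <;> ring
  have h3 : (d : ℝ) * Pop G d (fun y => if G.dist a y ≤ j then (1 : ℝ) else 0) z
      = (nlow G a z + nsib G a z : ℕ) := by
    have : nlow G a z + nsib G a z
        = (Finset.univ.filter (fun y => G.Adj z y ∧ G.dist a y ≤ j)).card := by
      rw [nlow, nsib, ← Finset.card_union_of_disjoint]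
      · congr 1
        ext y
        simp only [Finset.mem_union, Finset.mem_filter, Finset.mem_univ, true_and]
        rw [← and_or_left, le_iff_lt_or_eq]
      · rw [Finset.disjoint_filter]
        intro y _ h h'
        omega
    rw [this, Finset.card_filter, Pop, Finset.mul_sum]
    push_cast
    refine Finset.sum_congr rfl fun y _ => ?_
    by_cases h1 : G.Adj z y <;> by_cases h2 : G.dist a y ≤ j <;> simp [h1, h2, hd0]
  have h4 := Pop_add G d (fun _ => f (j + 1)) (fun y => (f (j - 1) - f (j + 1)) * (if G.dist a y ≤ j then 1 else 0)) z
  rw [Pop_smul, Pop_const G d hd hreg] at h4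
  rw [h2, h4] at h1
  have hnn : 0 ≤ f (j - 1) - f (j + 1) := sub_nonneg.2 (hf (by omega))
  have hT' : ((nlow G a z + nsib G a z : ℕ) : ℝ) ≤ T := by exact_mod_cast hT
  calc d * Pop G d (fun y => f (G.dist a y)) z
      ≤ d * (f (j + 1) + (f (j - 1) - f (j + 1)) * Pop G d (fun y => if G.dist a y ≤ j then 1 else 0) z) :=
        mul_le_mul_of_nonneg_left h1 (by positivity)
    _ = d * f (j + 1) + (f (j - 1) - f (j + 1)) * ((d : ℝ) * Pop G d (fun y => if G.dist a y ≤ j then (1 : ℝ) else 0) z) := by ring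
    _ = d * f (j + 1) + (f (j - 1) - f (j + 1)) * (nlow G a z + nsib G a z : ℕ) := by rw [h3]
    _ ≤ d * f (j + 1) + (f (j - 1) - f (j + 1)) * T := by gcongr
    _ = _ := by ring

noncomputable def frad (d m j : ℕ) : ℝ :=
  (((d : ℝ) - 1)⁻¹) ^ j + 3 * (((d : ℝ) - 1)⁻¹) ^ (max j m)

lemma lam_pos (d : ℕ) (hd : 3 ≤ d) : 0 < ((d : ℝ) - 1)⁻¹ := by
  have : (3 : ℝ) ≤ d := by exact_mod_cast hd
  apply inv_pos.2; linarith

lemma lam_le (d : ℕ) (hd : 3 ≤ d) : ((d : ℝ) - 1)⁻¹ ≤ 1 / 2 := by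
  have : (3 : ℝ) ≤ d := by exact_mod_cast hd
  rw [inv_le_comm₀ (by linarith) (by norm_num)]
  norm_num; linarith

lemma frad_anti (d m : ℕ) (hd : 3 ≤ d) : Antitone (frad d m) := by
  intro i j hij
  have h0 := (lam_pos d hd).le
  have h1 : ((d : ℝ) - 1)⁻¹ ≤ 1 := (lam_le d hd).trans (by norm_num)
  have e1 := pow_le_pow_of_le_one h0 h1 hij
  have e2 := pow_le_pow_of_le_one h0 h1 (max_le_max_right m hij)
  unfold frad; linarith

lemma frad_step1 (d m j : ℕ) (hd : 3 ≤ d) (hj : 1 ≤ j) :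
    frad d m (j - 1) + (d - 1) * frad d m (j + 1) ≤ d * frad d m j := by
  obtain ⟨i, rfl⟩ : ∃ i, j = i + 1 := ⟨j - 1, by omega⟩
  have hd3 : (3 : ℝ) ≤ d := by exact_mod_cast hd
  set l := ((d : ℝ) - 1)⁻¹ with hl
  have hlp : 0 < l := lam_pos d hd
  have hll : ((d : ℝ) - 1) * l = 1 := mul_inv_cancel₀ (by linarith)
  have key : ∀ k, ((d : ℝ) - 1) * l ^ (k + 1) = l ^ k := by
    intro k; rw [pow_succ, mul_comm (l ^ k), ← mul_assoc, hll, one_mul]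
  simp only [frad, ← hl, Nat.add_sub_cancel]
  have k1 := key (i + 1)
  have k2 := key i
  have hA : l ^ i + (d - 1) * l ^ (i + 1 + 1) = d * l ^ (i + 1) := by linarith
  have hB : l ^ (max i m) + (d - 1) * l ^ (max (i + 1 + 1) m) ≤ d * l ^ (max (i + 1) m) := by
    rcases lt_trichotomy (i + 1) m with h | h | h
    · rw [max_eq_right (by omega), max_eq_right (by omega), max_eq_right (by omega)]
      linarith
    · rw [max_eq_right (by omega), max_eq_left (by omega), max_eq_left (by omega), ← h, k1]
      have : 0 < l ^ (i + 1) := by positivity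
      nlinarith
    · rw [max_eq_left (by omega), max_eq_left (by omega), max_eq_left (by omega)]
      linarith
  linarith

lemma frad_step2 (d m : ℕ) (hd : 3 ≤ d) (hj : 1 ≤ m) :
    2 * frad d m (m - 1) + (d - 2) * frad d m (m + 1) ≤ d * frad d m m := by
  obtain ⟨i, rfl⟩ : ∃ i, m = i + 1 := ⟨m - 1, by omega⟩
  have hd3 : (3 : ℝ) ≤ d := by exact_mod_cast hd
  set l := ((d : ℝ) - 1)⁻¹ with hl
  have hlp : 0 < l := lam_pos d hd
  have hll : ((d : ℝ) - 1) * l = 1 := mul_inv_cancel₀ (by linarith)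
  have key : ∀ k, l ^ k = ((d : ℝ) - 1) * l ^ (k + 1) := by
    intro k; rw [pow_succ, mul_comm (l ^ k), ← mul_assoc, hll, one_mul]
  simp only [frad, ← hl, Nat.add_sub_cancel]
  rw [max_eq_right (by omega), max_eq_left (by omega), max_eq_left (by omega), key i, key (i + 1)]
  have : 0 < l ^ (i + 1 + 1) := by positivity
  nlinarith [mul_nonneg (mul_nonneg this.le (sub_nonneg.2 hd3)) (sub_nonneg.2 hd3), mul_nonneg this.le (sub_nonneg.2 hd3)]

/-- superharmonic radial function -/
lemma exists_phi (G : SimpleGraph V) (d : ℕ) (hd : 3 ≤ d) (hreg : IsReg G d)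
    (hconn : G.Connected) (a : V) (R : ℕ) (hR : 1 ≤ R)
    (hc : adjPairs G (gball G a R) ≤ 2 * (gball G a R).ncard) :
    ∃ φ : V → ℝ, (∀ z, 0 ≤ φ z) ∧ (∀ z, φ z ≤ 4 * (((d : ℝ) - 1)⁻¹) ^ (G.dist a z)) ∧
      ∀ z, (if z = a then 1 / 2 else 0) - 4 * (((d : ℝ) - 1)⁻¹) ^ (R - 1) ≤ φ z - Pop G d φ z := by
  obtain ⟨m, hm, hlev⟩ := levels G hconn a R hc
  have hd3 : (3 : ℝ) ≤ d := by exact_mod_cast hd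
  have hl0 := lam_pos d hd
  have hl2 := lam_le d hd
  have hanti := frad_anti d m hd
  have hnn : ∀ j, 0 ≤ frad d m j := fun j => by unfold frad; positivity
  have h4 : ∀ j, frad d m j ≤ 4 * (((d : ℝ) - 1)⁻¹) ^ j := by
    intro j
    have := pow_le_pow_of_le_one hl0.le (hl2.trans (by norm_num)) (le_max_left j m)
    unfold frad; linarith
  refine ⟨fun z => frad d m (G.dist a z), fun z => hnn _, fun z => h4 _, ?_⟩
  intro z
  have hpw : 0 ≤ (((d : ℝ) - 1)⁻¹) ^ (R - 1) := by positivity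
  by_cases hza : z = a
  · subst hza
    simp only [if_true, SimpleGraph.dist_self]
    have h1 : Pop G d (fun y => frad d m (G.dist z y)) z ≤ Pop G d (fun _ => frad d m 1) z := by
      apply Pop_mono_adj
      intro y hy
      rw [SimpleGraph.dist_eq_one_iff_adj.2 hy]
    rw [Pop_const G d hd hreg] at h1
    have h2 : frad d m 1 + 1 / 2 ≤ frad d m 0 := by
      have := pow_le_pow_of_le_one hl0.le (hl2.trans (by norm_num)) (max_le_max_right m (Nat.zero_le 1))
      unfold frad; simp only [pow_zero, pow_one]; linarith
    linarith
  · simp only [hza, if_false]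
    have hj : 1 ≤ G.dist a z := by
      rcases Nat.eq_zero_or_pos (G.dist a z) with h | h
      · exact absurd ((hconn.dist_eq_zero_iff).1 h).symm hza
      · exact h
    by_cases hzR : G.dist a z < R
    · have hmain : d * Pop G d (fun y => frad d m (G.dist a y)) z ≤ d * frad d m (G.dist a z) := by
        rcases hlev z hza hzR with h | ⟨h, hzm⟩
        · have := Pop_radial_le G d hd hreg hconn a z _ hanti 1 h
          have h1 := frad_step1 d m (G.dist a z) hd hj
          push_cast at this
          linarith
        · have := Pop_radial_le G d hd hreg hconn a z _ hanti 2 h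
          have h1 := frad_step2 d m hd (hzm ▸ hj)
          rw [hzm] at this ⊢
          push_cast at this
          linarith
      have := le_of_mul_le_mul_left hmain (by linarith)
      linarith
    · have h1 : Pop G d (fun y => frad d m (G.dist a y)) z ≤ Pop G d (fun _ => frad d m (R - 1)) z := by
        apply Pop_mono_adj
        intro y hy
        have := dist_adj_le G hconn a y z hy.symm
        exact hanti (by omega)
      rw [Pop_const G d hd hreg] at h1
      have := h4 (R - 1)
      have := hnn (G.dist a z)
      linarith

end radial
end GFF

namespace GFF

section det
variable {V : Type*} [Fintype V]

noncomputable def Qop (G : SimpleGraph V) (d : ℕ) (f : V → ℝ) (z : V) : ℝ :=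
  (f z + Pop G d f z) / 2

lemma Qop_mono (G : SimpleGraph V) (d : ℕ) (f g : V → ℝ) (h : ∀ z, f z ≤ g z) (z : V) :
    Qop G d f z ≤ Qop G d g z := by
  have := Pop_mono_adj G d f g z (fun y _ => h y)
  have := h z
  unfold Qop; linarith

lemma Qit_mono (G : SimpleGraph V) (d : ℕ) (k : ℕ) : ∀ (f g : V → ℝ) (_ : ∀ z, f z ≤ g z) (z : V),
    (Qop G d)^[k] f z ≤ (Qop G d)^[k] g z := by
  induction k with
  | zero => intro f g h z; exact h z
  | succ k ih =>
    intro f g h z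
    rw [Function.iterate_succ_apply, Function.iterate_succ_apply]
    exact ih _ _ (Qop_mono G d f g h) z

lemma Qit_add (G : SimpleGraph V) (d : ℕ) (k : ℕ) : ∀ (f g : V → ℝ),
    (Qop G d)^[k] (fun z => f z + g z) = fun z => (Qop G d)^[k] f z + (Qop G d)^[k] g z := by
  induction k with
  | zero => intro f g; rfl
  | succ k ih =>
    intro f g
    simp only [Function.iterate_succ_apply]
    rw [← ih]
    congr 1
    funext z
    simp only [Qop, Pop_add]; ring

lemma Qit_const (G : SimpleGraph V) (d : ℕ) (hd : 3 ≤ d) (hreg : IsReg G d) (c : ℝ) (k : ℕ) :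
    (Qop G d)^[k] (fun _ => c) = fun _ => c := by
  induction k with
  | zero => rfl
  | succ k ih =>
    rw [Function.iterate_succ_apply]
    have : Qop G d (fun _ => c) = fun _ => c := by
      funext z; simp only [Qop, Pop_const G d hd hreg]; ring
    rw [this, ih]

lemma Qit_le (G : SimpleGraph V) (d : ℕ) (hd : 3 ≤ d) (hreg : IsReg G d) (f : V → ℝ) (ε : ℝ)
    (hf : ∀ z, -ε ≤ f z - Pop G d f z) (k : ℕ) (z : V) :
    (Qop G d)^[k] f z ≤ f z + k * (ε / 2) := by
  induction k generalizing z with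
  | zero => simp
  | succ k ih =>
    rw [Function.iterate_succ_apply]
    have h1 : ∀ z, Qop G d f z ≤ f z + ε / 2 := by
      intro z; have := hf z; unfold Qop; linarith
    have h2 := Qit_mono G d k _ _ h1 z
    rw [Qit_add G d k f (fun _ => ε / 2), Qit_const G d hd hreg] at h2
    have := ih z
    push_cast
    linarith

lemma Qit_neg (G : SimpleGraph V) (d : ℕ) (hd : 3 ≤ d) (hreg : IsReg G d) (f : V → ℝ) (k : ℕ) (z : V) :
    (Qop G d)^[k] (fun v => - f v) z = - (Qop G d)^[k] f z := by
  have h1 := congrFun (Qit_add G d k f (fun v => - f v)) z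
  have h2 : (fun z => f z + - f z) = fun _ => (0 : ℝ) := by funext z; ring
  simp only [h2, Qit_const G d hd hreg] at h1
  linarith

lemma Qit_ge (G : SimpleGraph V) (d : ℕ) (hd : 3 ≤ d) (hreg : IsReg G d) (f : V → ℝ) (ε : ℝ)
    (hf : ∀ z, f z - Pop G d f z ≤ ε) (k : ℕ) (z : V) :
    f z - k * (ε / 2) ≤ (Qop G d)^[k] f z := by
  have h := Qit_le G d hd hreg (fun v => - f v) ε (by
    intro z
    have h1 := Pop_smul G d (-1) f z
    simp only [neg_one_mul] at h1
    rw [h1]; have := hf z; linarith) k z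
  rw [Qit_neg G d hd hreg] at h
  linarith

lemma Q_sq (G : SimpleGraph V) (d : ℕ) (hd : 3 ≤ d) (hreg : IsReg G d)
    (hconn : G.Connected) (β : ℝ) (hgap : SpectralGapLB G d β) (f : V → ℝ)
    (hf : ∑ z, f z = 0) :
    ∑ z, (Qop G d f z) ^ 2 ≤ (1 - β / 2) * ∑ z, f z ^ 2 := by
  have h1 := poincare G d hd hreg hconn β hgap f hf
  have h2 := lap_sq_le G d hd hreg f
  have e : ∑ z, (Qop G d f z) ^ 2 = ∑ z, f z ^ 2 - ∑ z, f z * (f z - Pop G d f z)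
      + (1 / 4) * ∑ z, (f z - Pop G d f z) ^ 2 := by
    rw [Finset.mul_sum, ← Finset.sum_sub_distrib, ← Finset.sum_add_distrib]
    refine Finset.sum_congr rfl fun z _ => ?_
    unfold Qop; ring
  rw [e]; linarith

lemma Qit_sq (G : SimpleGraph V) (d : ℕ) (hd : 3 ≤ d) (hreg : IsReg G d)
    (hconn : G.Connected) (β : ℝ) (hβ : β ≤ 2) (hgap : SpectralGapLB G d β) (k : ℕ) :
    ∀ (f : V → ℝ) (_ : ∑ z, f z = 0),
    ∑ z, ((Qop G d)^[k] f z) ^ 2 ≤ (1 - β / 2) ^ k * ∑ z, f z ^ 2 := by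
  induction k with
  | zero => intro f _; simp
  | succ k ih =>
    intro f hf
    have hQ : ∑ z, Qop G d f z = 0 := by
      simp only [Qop]
      rw [← Finset.sum_div, Finset.sum_add_distrib, Pop_sum G d hd hreg, hf]; simp
    have h1 := ih _ hQ
    have h2 := Q_sq G d hd hreg hconn β hgap f hf
    simp only [Function.iterate_succ_apply]
    refine h1.trans ?_
    rw [pow_succ, mul_assoc]
    exact mul_le_mul_of_nonneg_left h2 (pow_nonneg (by linarith) _)

lemma energy_bound (G : SimpleGraph V) (d : ℕ) (hd : 3 ≤ d) (hreg : IsReg G d)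
    (hconn : G.Connected) (β : ℝ) (hβ : 0 < β) (hgap : SpectralGapLB G d β)
    (F : Finset V) (hF : 4 * F.card ≤ 3 * Fintype.card V)
    (v : V → ℝ) (hv0 : ∀ z, 0 ≤ v z) (hvF : ∀ z, z ∉ F → v z = 0)
    (hL : ∀ z, 0 < v z → v z - Pop G d v z ≤ 1) (x : V) :
    v x ≤ 4 * Real.sqrt (Fintype.card V) / β := by
  set N : ℝ := (Fintype.card V : ℝ) with hN
  have hNpos : 0 < N := by
    have : Nonempty V := hconn.nonempty
    rw [hN]; exact_mod_cast Fintype.card_pos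
  set S := ∑ z, v z with hS
  set E := ∑ z, v z ^ 2 with hE
  have hS0 : 0 ≤ S := Finset.sum_nonneg fun z _ => hv0 z
  have h1 : ∑ z, v z * (v z - Pop G d v z) ≤ S := by
    apply Finset.sum_le_sum
    intro z _
    rcases (hv0 z).eq_or_lt with h | h
    · rw [← h]; simp
    · have := mul_le_mul_of_nonneg_left (hL z h) h.le
      linarith
  have hCS : S ^ 2 ≤ F.card * E := by
    have e1 : S = ∑ z ∈ F, v z := by
      rw [hS]; symm
      apply Finset.sum_subset (Finset.subset_univ _)
      intro z _ hz; exact hvF z hz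
    have e2 : ∑ z ∈ F, v z ^ 2 ≤ E :=
      Finset.sum_le_sum_of_subset_of_nonneg (Finset.subset_univ _) (fun z _ _ => sq_nonneg _)
    rw [e1]
    refine (sq_sum_le_card_mul_sum_sq).trans ?_
    gcongr
  have hF' : 4 * (F.card : ℝ) ≤ 3 * N := by rw [hN]; exact_mod_cast hF
  have hE0 : 0 ≤ E := Finset.sum_nonneg fun z _ => sq_nonneg _
  have hCS' : S ^ 2 ≤ 3 / 4 * N * E := hCS.trans (by nlinarith)
  set m := S / N with hm
  have hmN : m * N = S := by rw [hm]; field_simp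
  have hp := poincare G d hd hreg hconn β hgap (fun z => v z - m) (by
    rw [Finset.sum_sub_distrib]
    simp only [Finset.sum_const, Finset.card_univ, nsmul_eq_mul, ← hN]
    rw [← hS]; linarith)
  have e3 : ∑ z, (v z - m) ^ 2 = E - S ^ 2 / N := by
    have : ∀ z, (v z - m) ^ 2 = v z ^ 2 - 2 * m * v z + m ^ 2 := fun z => by ring
    simp only [this]
    rw [Finset.sum_add_distrib, Finset.sum_sub_distrib, ← Finset.mul_sum]
    simp only [Finset.sum_const, Finset.card_univ, nsmul_eq_mul, ← hN]
    rw [← hS, ← hE, hm]; field_simp; ring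
  have e4 : ∑ z, (v z - m) * ((v z - m) - Pop G d (fun z => v z - m) z)
      = ∑ z, v z * (v z - Pop G d v z) := by
    have e5 : ∀ z, (v z - m) * ((v z - m) - Pop G d (fun z => v z - m) z)
        = v z * (v z - Pop G d v z) - m * (v z - Pop G d v z) := by
      intro z
      have := Pop_sub G d v (fun _ => m) z
      rw [Pop_const G d hd hreg] at this
      rw [this]; ring
    simp only [e5]
    rw [Finset.sum_sub_distrib, ← Finset.mul_sum, Finset.sum_sub_distrib (f := v), Pop_sum G d hd hreg]
    simp
  rw [e3, e4] at hp
  have h6 : S ^ 2 / N ≤ 3 / 4 * E := by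
    rw [div_le_iff₀ hNpos]; linarith
  have h7 : β * (E / 4) ≤ S := by
    have : β * (E / 4) ≤ β * (E - S ^ 2 / N) := mul_le_mul_of_nonneg_left (by linarith) hβ.le
    linarith
  have h8 : E ≤ 16 * N / β ^ 2 := by
    rcases hE0.eq_or_lt with h | h
    · rw [← h]; positivity
    · have h9 : (β * (E / 4)) ^ 2 ≤ N * E := by
        calc (β * (E / 4)) ^ 2 ≤ S ^ 2 := by gcongr
          _ ≤ _ := hCS'
          _ ≤ N * E := by nlinarith
      rw [le_div_iff₀ (by positivity)]
      have : E * (E * β ^ 2) ≤ E * (16 * N) := by nlinarith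
      exact le_of_mul_le_mul_left this h
  have h10 : v x ^ 2 ≤ E := Finset.single_le_sum (f := fun z => v z ^ 2) (fun z _ => sq_nonneg _) (Finset.mem_univ x)
  apply le_of_sq_le_sq₀ _ (by positivity)
  rw [div_pow, mul_pow, Real.sq_sqrt hNpos.le]
  norm_num
  linarith
where
  le_of_sq_le_sq₀ {a b : ℝ} (h : a ^ 2 ≤ b ^ 2) (hb : 0 ≤ b) : a ≤ b := by
    exact le_of_sq_le_sq h hb

/-- lower bound on the mean hitting time, and basic facts about `ρ`. -/
lemma hbar_lower (G : SimpleGraph V) (d : ℕ) (hd : 3 ≤ d) (hreg : IsReg G d)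
    (A : Finset V) (hA : A.Nonempty) (h : V → ℝ)
    (h0 : ∀ z ∈ A, h z = 0) (h1 : ∀ z, z ∉ A → h z = 1 + Pop G d h z)
    (hcA : 2 * A.card ≤ Fintype.card V) :
    (Fintype.card V : ℝ) / (4 * A.card) ≤ (Fintype.card V : ℝ)⁻¹ * ∑ z, h z := by
  set N : ℝ := (Fintype.card V : ℝ) with hN
  have hApos : (0 : ℝ) < A.card := by exact_mod_cast hA.card_pos
  have hcA' : 2 * (A.card : ℝ) ≤ N := by rw [hN]; exact_mod_cast hcA
  have hNpos : 0 < N := by linarith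
  set ρ : V → ℝ := fun z => 1 - (h z - Pop G d h z) with hρ
  have hρA : ∀ z, z ∉ A → ρ z = 0 := by
    intro z hz; simp only [hρ]; rw [h1 z hz]; ring
  have hρsum : ∑ z, ρ z = N := by
    simp only [hρ]
    rw [Finset.sum_sub_distrib, Finset.sum_sub_distrib, Pop_sum G d hd hreg]; simp [hN]
  have hρsum' : ∑ z ∈ A, ρ z = N := by
    rw [← hρsum]
    exact Finset.sum_subset (Finset.subset_univ _) (fun z _ hz => hρA z hz)
  have hCS : N ^ 2 ≤ A.card * ∑ z, ρ z ^ 2 := by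
    rw [← hρsum']
    refine (sq_sum_le_card_mul_sum_sq).trans ?_
    gcongr
    exact Finset.subset_univ _
  have hS := lap_sq_le G d hd hreg h
  have e1 : ∑ z, h z * (h z - Pop G d h z) = ∑ z, h z := by
    refine Finset.sum_congr rfl fun z _ => ?_
    by_cases hz : z ∈ A
    · rw [h0 z hz]; ring
    · nth_rewrite 2 [h1 z hz]; ring
  have e2 : ∑ z, (h z - Pop G d h z) ^ 2 = ∑ z, ρ z ^ 2 - N := by
    have : ∀ z, (h z - Pop G d h z) ^ 2 = ρ z ^ 2 - 2 * ρ z + 1 := by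
      intro z; simp only [hρ]; ring
    simp only [this]
    rw [Finset.sum_add_distrib, Finset.sum_sub_distrib, ← Finset.mul_sum, hρsum]
    simp [← hN]; ring
  rw [e1, e2] at hS
  have h3 : N ^ 2 / A.card ≤ ∑ z, ρ z ^ 2 := by
    rw [div_le_iff₀ hApos]; linarith
  have h4 : 2 * N ≤ N ^ 2 / A.card := by
    rw [le_div_iff₀ hApos]; nlinarith
  have h5 : N ^ 2 / A.card ≤ 4 * ∑ z, h z := by linarith
  have : N / (4 * A.card) = N⁻¹ * (N ^ 2 / A.card / 4) := by field_simp
  rw [this]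
  apply mul_le_mul_of_nonneg_left _ (by positivity)
  linarith

/-- far from `A`, the mean hitting time is almost the average one. -/
lemma far_est (G : SimpleGraph V) (d : ℕ) (hd : 3 ≤ d) (hreg : IsReg G d)
    (hconn : G.Connected) (β : ℝ) (hβ : 0 < β ∧ β ≤ 2) (hgap : SpectralGapLB G d β)
    (R : ℕ) (hR : 1 ≤ R)
    (hc : ∀ a, adjPairs G (gball G a R) ≤ 2 * (gball G a R).ncard)
    (A : Finset V) (h : V → ℝ) (hnn : ∀ z, 0 ≤ h z)
    (h0 : ∀ z ∈ A, h z = 0) (h1 : ∀ z, z ∉ A → h z = 1 + Pop G d h z)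
    (s : ℕ) (y : V) (hy : ∀ a ∈ A, s + 1 ≤ G.dist a y) :
    |h y - (Fintype.card V : ℝ)⁻¹ * ∑ z, h z| ≤ R + (Fintype.card V : ℝ) *
      (8 * (((d : ℝ) - 1)⁻¹) ^ (s + 1) + 4 * R * (((d : ℝ) - 1)⁻¹) ^ (R - 1)
        + Real.sqrt ((1 - β / 2) ^ R) / β) := by
  set N : ℝ := (Fintype.card V : ℝ) with hN
  have hNpos : 0 < N := by
    have : Nonempty V := hconn.nonempty
    rw [hN]; exact_mod_cast Fintype.card_pos
  set l := ((d : ℝ) - 1)⁻¹ with hl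
  have hl0 : 0 < l := lam_pos d hd
  have hl1 : l ≤ 1 := (lam_le d hd).trans (by norm_num)
  set hb := N⁻¹ * ∑ z, h z with hhb
  set ρ : V → ℝ := fun z => 1 - (h z - Pop G d h z) with hρ
  have hρA : ∀ z, z ∉ A → ρ z = 0 := by
    intro z hz; simp only [hρ]; rw [h1 z hz]; ring
  have hPnn : ∀ z, 0 ≤ Pop G d h z := fun z =>
    Finset.sum_nonneg fun y _ => mul_nonneg (coef_nonneg G d z y) (hnn y)
  have hρnn : ∀ z, 0 ≤ ρ z := by
    intro z
    by_cases hz : z ∈ A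
    · simp only [hρ, h0 z hz]; have := hPnn z; linarith
    · rw [hρA z hz]
  have hρsum : ∑ z, ρ z = N := by
    simp only [hρ]
    rw [Finset.sum_sub_distrib, Finset.sum_sub_distrib, Pop_sum G d hd hreg]; simp [hN]
  -- upper bound
  have hup : h y - R * (1 / 2) ≤ (Qop G d)^[R] h y := by
    apply Qit_ge G d hd hreg h 1
    intro z; have := hρnn z; simp only [hρ] at this; linarith
  -- lower bound
  choose φ hφ0 hφ4 hφL using fun a => exists_phi G d hd hreg hconn a R hR (hc a)
  set Φ : V → ℝ := fun z => ∑ a, ρ a * φ a z with hΦ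
  have hΦL : ∀ z, ρ z / 2 - 4 * l ^ (R - 1) * N ≤ Φ z - Pop G d Φ z := by
    intro z
    have e : Φ z - Pop G d Φ z = ∑ a, ρ a * (φ a z - Pop G d (φ a) z) := by
      have : Pop G d Φ z = ∑ a, ρ a * Pop G d (φ a) z := by
        simp only [Pop, hΦ, Finset.mul_sum]
        rw [Finset.sum_comm]
        refine Finset.sum_congr rfl fun a _ => Finset.sum_congr rfl fun y _ => by ring
      rw [this]
      simp only [hΦ, mul_sub, Finset.sum_sub_distrib]
    rw [e]
    calc ρ z / 2 - 4 * l ^ (R - 1) * N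
        = ∑ a, ρ a * ((if z = a then 1 / 2 else 0) - 4 * l ^ (R - 1)) := by
          simp only [mul_sub, Finset.sum_sub_distrib, ← Finset.sum_mul, hρsum]
          simp; ring
      _ ≤ _ := Finset.sum_le_sum fun a _ => mul_le_mul_of_nonneg_left (hφL a z) (hρnn a)
  have hΦnn : ∀ z, 0 ≤ Φ z := fun z => Finset.sum_nonneg fun a _ => mul_nonneg (hρnn a) (hφ0 a z)
  have hΦy : Φ y ≤ N * (4 * l ^ (s + 1)) := by
    rw [← hρsum, Finset.sum_mul]
    apply Finset.sum_le_sum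
    intro a _
    by_cases ha : a ∈ A
    · apply mul_le_mul_of_nonneg_left _ (hρnn a)
      refine (hφ4 a y).trans ?_
      have := pow_le_pow_of_le_one hl0.le hl1 (hy a ha)
      linarith
    · rw [hρA a ha]; simp
  have hlow := Qit_le G d hd hreg (fun z => h z + 2 * Φ z) (8 * l ^ (R - 1) * N) (by
    intro z
    rw [Pop_add G d h (fun z => 2 * Φ z), Pop_smul]
    have := hΦL z
    simp only [hρ] at this
    linarith) R y
  rw [Qit_add G d R h (fun z => 2 * Φ z)] at hlow
  have hQΦ : 0 ≤ (Qop G d)^[R] (fun z => 2 * Φ z) y := by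
    have := Qit_mono G d R (fun _ => 0) (fun z => 2 * Φ z) (fun z => by have := hΦnn z; positivity) y
    rwa [Qit_const G d hd hreg] at this
  -- spectral part
  set f : V → ℝ := fun z => h z + (-hb) with hf
  have hfsum : ∑ z, f z = 0 := by
    simp only [hf]
    rw [Finset.sum_add_distrib]
    simp only [Finset.sum_const, Finset.card_univ, nsmul_eq_mul, ← hN]
    rw [hhb]; field_simp; ring
  have hfL : ∀ z, f z - Pop G d f z = 1 - ρ z := by
    intro z
    simp only [hf]
    rw [Pop_add G d h (fun _ => -hb), Pop_const G d hd hreg]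
    simp only [hρ]; ring
  have hpo := poincare G d hd hreg hconn β hgap f hfsum
  have hfsq : Real.sqrt (∑ z, f z ^ 2) ≤ N / β := by
    have hE0 : 0 ≤ ∑ z, f z ^ 2 := Finset.sum_nonneg fun z _ => sq_nonneg _
    have hCS : (∑ z, f z * (f z - Pop G d f z)) ^ 2 ≤ (∑ z, f z ^ 2) * ∑ z, (f z - Pop G d f z) ^ 2 :=
      Finset.sum_mul_sq_le_sq_mul_sq _ _ _
    have hg : ∑ z, (f z - Pop G d f z) ^ 2 ≤ N ^ 2 := by
      simp only [hfL]
      have : ∀ z, (1 - ρ z) ^ 2 = ρ z ^ 2 - 2 * ρ z + 1 := fun z => by ring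
      simp only [this]
      rw [Finset.sum_add_distrib, Finset.sum_sub_distrib, ← Finset.mul_sum, hρsum]
      have h5 : ∑ z, ρ z ^ 2 ≤ N ^ 2 := by
        rw [← hρsum]
        exact Finset.sum_sq_le_sq_sum_of_nonneg (fun z _ => hρnn z)
      simp [← hN]; linarith
    set E := ∑ z, f z ^ 2 with hE
    have h6 : (β * E) ^ 2 ≤ E * N ^ 2 := by
      have : 0 ≤ β * E := mul_nonneg hβ.1.le hE0
      calc (β * E) ^ 2 ≤ _ := by gcongr
        _ ≤ _ := hCS
        _ ≤ _ := by gcongr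
    rw [Real.sqrt_le_left (by have := hβ.1; positivity)]
    rcases hE0.eq_or_lt with h | h
    · rw [← h]; positivity
    · rw [div_pow, le_div_iff₀ (by have := hβ.1; positivity)]
      have : E * (E * β ^ 2) ≤ E * N ^ 2 := by linarith [h6, mul_pow β E 2]
      exact le_of_mul_le_mul_left this h
  have hspec : |(Qop G d)^[R] h y - hb| ≤ Real.sqrt ((1 - β / 2) ^ R) * (N / β) := by
    have e : (Qop G d)^[R] f y = (Qop G d)^[R] h y - hb := by
      have := congrFun (Qit_add G d R h (fun _ => -hb)) y
      rw [Qit_const G d hd hreg] at this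
      rw [hf, this]; ring
    rw [← e]
    have h7 := Qit_sq G d hd hreg hconn β hβ.2 hgap R f hfsum
    have h8 : ((Qop G d)^[R] f y) ^ 2 ≤ ∑ z, ((Qop G d)^[R] f z) ^ 2 :=
      Finset.single_le_sum (f := fun z => ((Qop G d)^[R] f z) ^ 2) (fun z _ => sq_nonneg _) (Finset.mem_univ y)
    calc |(Qop G d)^[R] f y| ≤ Real.sqrt ((1 - β / 2) ^ R * ∑ z, f z ^ 2) := Real.abs_le_sqrt (h8.trans h7)
      _ = Real.sqrt ((1 - β / 2) ^ R) * Real.sqrt (∑ z, f z ^ 2) :=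
        Real.sqrt_mul (pow_nonneg (by linarith [hβ.2]) _) _
      _ ≤ _ := by gcongr
  have hs1 := abs_le.1 hspec
  have hRr : (0 : ℝ) ≤ R := by positivity
  have e9 : Real.sqrt ((1 - β / 2) ^ R) * (N / β) = N * (Real.sqrt ((1 - β / 2) ^ R) / β) := by ring
  rw [e9] at hs1
  have hpp : 0 ≤ N * l ^ (s + 1) := by positivity
  have hpq : 0 ≤ N * (R * l ^ (R - 1)) := by positivity
  rw [abs_le]
  constructor <;> nlinarith [hs1.1, hs1.2]

end det
end GFF

namespace GFF

section core
variable {V : Type*} [Fintype V]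

lemma F_card (G : SimpleGraph V) (d : ℕ) (hd : 3 ≤ d) (hreg : IsReg G d) (F : Finset V)
    (hF : adjPairs G (F : Set V) ≤ 2 * F.card) : 4 * F.card ≤ 3 * Fintype.card V := by
  have hd3 : (3 : ℝ) ≤ d := by exact_mod_cast hd
  set N : ℝ := (Fintype.card V : ℝ) with hN
  set i : V → ℝ := fun z => if z ∈ F then 1 else 0 with hi
  have e0 : ∑ z, i z = F.card := by simp [hi]
  have e1 : ∑ z, i z * Pop G d i z = (d : ℝ)⁻¹ * adjPairs G (F : Set V) := by
    have : adjPairs G (F : Set V)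
        = (Finset.univ.filter (fun p : V × V => p.1 ∈ F ∧ p.2 ∈ F ∧ G.Adj p.1 p.2)).card := by
      unfold adjPairs
      rw [← Set.ncard_coe_finset]
      congr 1
      ext p; simp
    rw [this, Finset.card_filter, Fintype.sum_prod_type]
    push_cast
    simp only [Pop, Finset.mul_sum]
    refine Finset.sum_congr rfl fun z _ => Finset.sum_congr rfl fun y _ => ?_
    by_cases h1 : z ∈ F <;> by_cases h2 : y ∈ F <;> by_cases h3 : G.Adj z y <;> simp [hi, h1, h2, h3]
  have e2 : ∑ z, i z * Pop G d (fun v => 1 - i v) z ≤ N - F.card := by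
    rw [Pop_symm]
    have : N - F.card = ∑ z, (1 - i z) := by
      rw [Finset.sum_sub_distrib, e0]; simp [hN]
    rw [this]
    apply Finset.sum_le_sum
    intro z _
    have hz : 0 ≤ 1 - i z := by simp only [hi]; split_ifs <;> norm_num
    have h1 : Pop G d i z ≤ Pop G d (fun _ => 1) z := by
      apply Pop_mono_adj; intro y _; simp only [hi]; split_ifs <;> norm_num
    rw [Pop_const G d hd hreg] at h1
    have := mul_le_mul_of_nonneg_left h1 hz
    linarith
  have e3 : ∑ z, i z * Pop G d i z + ∑ z, i z * Pop G d (fun v => 1 - i v) z = F.card := by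
    rw [← Finset.sum_add_distrib, ← e0]
    refine Finset.sum_congr rfl fun z _ => ?_
    have := Pop_sub G d (fun _ => 1) i z
    rw [Pop_const G d hd hreg] at this
    rw [this]; ring
  rw [e1] at e3
  have h4 : (adjPairs G (F : Set V) : ℝ) ≤ 2 * F.card := by exact_mod_cast hF
  have h5 : (d : ℝ)⁻¹ * adjPairs G (F : Set V) ≤ 3⁻¹ * (2 * F.card) := by gcongr
  have h6 : 4 * (F.card : ℝ) ≤ 3 * N := by linarith
  rw [hN] at h6
  exact_mod_cast h6

lemma core (G : SimpleGraph V) (d : ℕ) (hd : 3 ≤ d) (hreg : IsReg G d)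
    (hconn : G.Connected) (β : ℝ) (hβ : 0 < β ∧ β ≤ 2) (hgap : SpectralGapLB G d β)
    (R : ℕ) (hR : 1 ≤ R)
    (hc : ∀ a, adjPairs G (gball G a R) ≤ 2 * (gball G a R).ncard)
    (A : Set V) (hA : A.Nonempty) (h p : V → ℝ) (hnn : ∀ z, 0 ≤ h z)
    (h0 : ∀ z ∈ A, h z = 0) (h1 : ∀ z, z ∉ A → h z = 1 + Pop G d h z)
    (s : ℕ) (hs : 1 ≤ s) (x : V) (hx : GoodVertex G A s x)
    (p0 : ∀ z ∈ A, p z = 0) (p1 : ∀ z, z ∉ A → z ∉ Fset G A s x → p z = 1)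
    (pF : ∀ z ∈ Fset G A s x, p z = Pop G d p z)
    (hcA : 2 * A.ncard ≤ Fintype.card V) :
    |h x / ((Fintype.card V : ℝ)⁻¹ * ∑ z, h z) - p x| ≤
      4 * A.ncard * ((R : ℝ) / Fintype.card V +
      (8 * (((d : ℝ) - 1)⁻¹) ^ (s + 1) + 4 * R * (((d : ℝ) - 1)⁻¹) ^ (R - 1)
        + Real.sqrt ((1 - β / 2) ^ R) / β) + 4 * Real.sqrt (Fintype.card V) / β / Fintype.card V) := by
  obtain ⟨hxA, ⟨a0, ⟨ha0A, ha0⟩, _⟩, hTx, _⟩ := hx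
  set F := Fset G A s x with hF
  set N : ℝ := (Fintype.card V : ℝ) with hN
  have hNpos : 0 < N := by
    have : Nonempty V := hconn.nonempty
    rw [hN]; exact_mod_cast Fintype.card_pos
  have hxF : x ∈ F := by
    refine ⟨SimpleGraph.Walk.nil, ?_⟩
    intro v hv
    simp only [SimpleGraph.Walk.support_nil, List.mem_singleton] at hv
    subst hv
    refine ⟨⟨a0, ha0A, ?_⟩, hxA⟩
    rw [SimpleGraph.dist_eq_one_iff_adj.2 ha0.symm]; exact hs
  have hFA : ∀ z ∈ F, z ∉ A := by
    rintro z ⟨w, hw⟩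
    exact (hw z w.end_mem_support).2
  have hbd : ∀ z ∈ F, ∀ y, G.Adj z y → y ∉ F → y ∉ A → ∀ a ∈ A, s + 1 ≤ G.dist a y := by
    rintro z ⟨w, hw⟩ y hzy hyF hyA a ha
    by_contra hlt
    apply hyF
    refine ⟨w.concat hzy, ?_⟩
    intro v hv
    rw [SimpleGraph.Walk.support_concat] at hv
    simp only [List.concat_eq_append, List.mem_append, List.mem_singleton] at hv
    rcases hv with hv | rfl
    · exact hw v hv
    · exact ⟨⟨a, ha, by omega⟩, hyA⟩
  set Af := A.toFinset with hAf
  have hAm : ∀ z, z ∈ Af ↔ z ∈ A := fun z => by simp [hAf]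
  have hAc : A.ncard = Af.card := Set.ncard_eq_toFinset_card' A
  set Ff := F.toFinset with hFf
  have hFm : ∀ z, z ∈ Ff ↔ z ∈ F := fun z => by simp [hFf]
  have hFc : F.ncard = Ff.card := Set.ncard_eq_toFinset_card' F
  have hFcoe : (Ff : Set V) = F := by ext z; simp [hFf]
  have hFcard := F_card G d hd hreg Ff (by
    rw [hFcoe]
    unfold TxZero at hTx
    rw [hTx, hFc]; omega)
  have hAfne : Af.Nonempty := by
    obtain ⟨a, ha⟩ := hA
    exact ⟨a, (hAm a).2 ha⟩
  have h0' : ∀ z ∈ Af, h z = 0 := fun z hz => h0 z ((hAm z).1 hz)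
  have h1' : ∀ z, z ∉ Af → h z = 1 + Pop G d h z := fun z hz => h1 z (fun h => hz ((hAm z).2 h))
  have hlow := hbar_lower G d hd hreg Af hAfne h h0' h1' (hAc ▸ hcA)
  have hApos : (0 : ℝ) < Af.card := by exact_mod_cast hAfne.card_pos
  set hb := N⁻¹ * ∑ z, h z with hhb
  have hbpos : 0 < hb := lt_of_lt_of_le (by positivity) hlow
  set D := (R : ℝ) + N * (8 * (((d : ℝ) - 1)⁻¹) ^ (s + 1) + 4 * R * (((d : ℝ) - 1)⁻¹) ^ (R - 1)
        + Real.sqrt ((1 - β / 2) ^ R) / β) with hD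
  have hl0 := lam_pos d hd
  have hβ0 := hβ.1
  have hD0 : 0 ≤ D := by positivity
  have hfar : ∀ y, (∀ a ∈ A, s + 1 ≤ G.dist a y) → |h y - hb| ≤ D := fun y hy =>
    far_est G d hd hreg hconn β hβ hgap R hR hc Af h hnn h0' h1' s y (fun a ha => hy a ((hAm a).1 ha))
  set ψ : V → ℝ := fun z => h z - hb * p z with hψ
  have hψL : ∀ z ∈ F, ψ z - Pop G d ψ z = 1 := by
    intro z hz
    simp only [hψ]
    rw [Pop_sub G d h (fun z => hb * p z), Pop_smul, ← pF z hz]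
    have := h1 z (hFA z hz)
    linarith
  have hψb : ∀ z ∈ F, ∀ y, G.Adj z y → y ∉ F → |ψ y| ≤ D := by
    intro z hz y hzy hyF
    by_cases hyA : y ∈ A
    · simp only [hψ, h0 y hyA, p0 y hyA]; simpa using hD0
    · simp only [hψ, p1 y hyA hyF, mul_one]
      exact hfar y (hbd z hz y hzy hyF hyA)
  have gen : ∀ (g : V → ℝ), (∀ z ∈ F, g z - Pop G d g z ≤ 1) →
      (∀ z ∈ F, ∀ y, G.Adj z y → y ∉ F → g y ≤ D) → g x ≤ D + 4 * Real.sqrt N / β := by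
    intro g hg hgb
    set v : V → ℝ := fun z => if z ∈ F then max (g z - D) 0 else 0 with hv
    have hv0 : ∀ z, 0 ≤ v z := by intro z; simp only [hv]; split_ifs <;> simp
    have := energy_bound G d hd hreg hconn β hβ.1 hgap Ff hFcard v hv0
      (by intro z hz; simp only [hv]; rw [if_neg (fun h => hz ((hFm z).2 h))])
      (by
        intro z hz
        have hzF : z ∈ F := by
          by_contra h; simp only [hv, if_neg h] at hz; exact lt_irrefl _ hz
        have hvz : v z = g z - D := by
          simp only [hv, if_pos hzF] at hz ⊢
          rcases le_total (g z - D) 0 with h | h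
          · rw [max_eq_right h] at hz; exact absurd hz (lt_irrefl _)
          · exact max_eq_left h
        have hP : Pop G d (fun y => g y - D) z ≤ Pop G d v z := by
          apply Pop_mono_adj
          intro y hy
          by_cases hyF : y ∈ F
          · simp only [hv, if_pos hyF]; exact le_max_left _ _
          · simp only [hv, if_neg hyF]; have := hgb z hzF y hy hyF; linarith
        rw [Pop_sub G d g (fun _ => D), Pop_const G d hd hreg] at hP
        have := hg z hzF
        rw [hvz]; linarith) x
    simp only [hv, if_pos hxF] at this
    have := le_max_left (g x - D) 0
    linarith
  have hu := gen ψ (fun z hz => (hψL z hz).le) (fun z hz y hzy hy => (abs_le.1 (hψb z hz y hzy hy)).2)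
  have hl := gen (fun z => -1 * ψ z) (fun z hz => by
      have := hψL z hz; rw [Pop_smul]; linarith)
    (fun z hz y hzy hy => by have := (abs_le.1 (hψb z hz y hzy hy)).1; linarith)
  have habs : |ψ x| ≤ D + 4 * Real.sqrt N / β := abs_le.2 ⟨by linarith, hu⟩
  have e : h x / hb - p x = ψ x / hb := by simp only [hψ]; field_simp
  rw [e, abs_div, abs_of_pos hbpos, div_le_iff₀ hbpos, hAc]
  refine habs.trans ?_
  set X := ((R : ℝ) / N +
      (8 * (((d : ℝ) - 1)⁻¹) ^ (s + 1) + 4 * R * (((d : ℝ) - 1)⁻¹) ^ (R - 1)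
        + Real.sqrt ((1 - β / 2) ^ R) / β) + 4 * Real.sqrt N / β / N) with hX
  have hX0 : 0 ≤ X := by positivity
  calc D + 4 * Real.sqrt N / β = 4 * Af.card * X * (N / (4 * Af.card)) := by
        rw [hX, hD]; field_simp
    _ ≤ _ := by gcongr

end core
end GFF

namespace GFF

section prob
variable {V : Type*} [Fintype V] [MeasurableSpace V]

lemma srw_start (G : SimpleGraph V) (d : ℕ) (W : V → Measure (ℕ → V)) (hW : IsSRW G d W)
    (x v : V) : W x {ω | ω 0 = v} = if v = x then 1 else 0 := by
  have h := hW.2 x 0 (fun _ => v)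
  have e : {ω : ℕ → V | ∀ i ≤ 0, ω i = (fun _ => v) i} = {ω | ω 0 = v} := by
    ext ω; simp
  rw [e] at h
  rw [h]; simp

lemma srw_discrete (G : SimpleGraph V) (d : ℕ) (W : V → Measure (ℕ → V)) (hW : IsSRW G d W) :
    MeasurableSingletonClass V := by
  have sep : ∀ y y' : V, y ≠ y' → ∃ s : Set V, MeasurableSet s ∧ y ∉ s ∧ y' ∈ s := by
    intro y y' hne
    by_contra hcon
    push Not at hcon
    have h0 : W y {ω | ω 0 = y'} = 0 := by
      rw [srw_start G d W hW, if_neg hne.symm]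
    have h1 : W y {ω | ω 0 = y} = 1 := by
      rw [srw_start G d W hW, if_pos rfl]
    set S := toMeasurable (W y) {ω : ℕ → V | ω 0 = y'} with hS
    have hSm : MeasurableSet S := measurableSet_toMeasurable _ _
    have hS0 : W y S = 0 := by rw [hS, measure_toMeasurable, h0]
    have hsub : {ω : ℕ → V | ω 0 = y} ⊆ S := by
      intro ω hω
      have hm : Measurable (fun v : V => Function.update ω 0 v) := measurable_update ω
      have hpre := hm hSm
      by_contra hnot
      have hy' : y' ∈ (fun v : V => Function.update ω 0 v) ⁻¹' S := by
        apply subset_toMeasurable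
        simp
      refine hcon _ hpre ?_ hy'
      intro hin
      apply hnot
      have : Function.update ω 0 y = ω := by
        rw [← (show ω 0 = y from hω)]; simp
      simpa [this] using hin
    have := measure_mono (μ := W y) hsub
    rw [h1, hS0] at this
    simp at this
  refine ⟨fun y => ?_⟩
  choose! s hs using fun y' (h : y ≠ y') => sep y y' h
  have : ({y} : Set V)ᶜ = ⋃ y' ∈ {y' | y ≠ y'}, s y' := by
    ext z
    simp only [Set.mem_compl_iff, Set.mem_singleton_iff, Set.mem_iUnion, Set.mem_setOf_eq]
    constructor
    · intro hz
      exact ⟨z, fun h => hz h.symm, (hs z (fun h => hz h.symm)).2.2⟩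
    · rintro ⟨y', hy', hz⟩ rfl
      exact (hs y' hy').2.1 hz
  rw [← MeasurableSet.compl_iff, this]
  exact MeasurableSet.biUnion (Set.to_countable _) (fun y' hy' => (hs y' hy').1)

def shiftw (ω : ℕ → V) : ℕ → V := fun i => ω (i + 1)

lemma shiftw_meas : Measurable (shiftw : (ℕ → V) → (ℕ → V)) :=
  measurable_pi_lambda _ (fun i => measurable_pi_apply (i + 1))

def cyls (V : Type*) : Set (Set (ℕ → V)) :=
  {S | S = ∅ ∨ ∃ (k : ℕ) (p : ℕ → V), S = {ω | ∀ i ≤ k, ω i = p i}}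

lemma cyls_pi : IsPiSystem (cyls V) := by
  rintro S hS S' hS' hne
  rcases hS with rfl | ⟨k, p, rfl⟩
  · simp at hne
  rcases hS' with rfl | ⟨k', p', rfl⟩
  · simp at hne
  obtain ⟨w, hw, hw'⟩ := hne
  right
  refine ⟨max k k', w, ?_⟩
  ext ω
  simp only [Set.mem_inter_iff, Set.mem_setOf_eq] at *
  constructor
  · rintro ⟨h1, h2⟩ i hi
    rcases le_max_iff.1 hi with h | h
    · rw [h1 i h, hw i h]
    · rw [h2 i h, hw' i h]
  · intro h
    exact ⟨fun i hi => (h i (le_max_of_le_left hi)).trans (hw i hi),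
      fun i hi => (h i (le_max_of_le_right hi)).trans (hw' i hi)⟩

lemma cyls_gen [MeasurableSingletonClass V] :
    (MeasurableSpace.pi : MeasurableSpace (ℕ → V)) = MeasurableSpace.generateFrom (cyls V) := by
  apply le_antisymm
  · apply iSup_le
    intro i
    rw [← measurable_iff_comap_le]
    refine @measurable_to_countable' V (ℕ → V) _ _ (MeasurableSpace.generateFrom (cyls V)) _ ?_
    intro v
    have : (fun ω : ℕ → V => ω i) ⁻¹' {v} = ⋃ q ∈ {q : Fin (i + 1) → V | q (Fin.last i) = v},
        {ω | ∀ j ≤ i, ω j = (fun j => if h : j < i + 1 then q ⟨j, h⟩ else v) j} := by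
      ext ω
      simp only [Set.mem_preimage, Set.mem_singleton_iff, Set.mem_iUnion, Set.mem_setOf_eq]
      constructor
      · intro h
        refine ⟨fun j => ω j, h, ?_⟩
        intro j hj
        rw [dif_pos (by omega)]
      · rintro ⟨q, hq, hω⟩
        have := hω i le_rfl
        rw [dif_pos (by omega)] at this
        rw [this]; exact hq
    rw [this]
    refine MeasurableSet.biUnion (Set.to_countable _) ?_
    intro q _
    exact MeasurableSpace.measurableSet_generateFrom (Or.inr ⟨i, _, rfl⟩)
  · apply MeasurableSpace.generateFrom_le
    rintro S (rfl | ⟨k, p, rfl⟩)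
    · exact MeasurableSet.empty
    · have : {ω : ℕ → V | ∀ i ≤ k, ω i = p i} = ⋂ i ∈ {i | i ≤ k}, (fun ω : ℕ → V => ω i) ⁻¹' {p i} := by
        ext ω; simp
      rw [this]
      exact MeasurableSet.biInter (Set.to_countable _)
        (fun i _ => measurable_pi_apply i (measurableSet_singleton _))

lemma srw_ae_start [MeasurableSingletonClass V] (G : SimpleGraph V) (d : ℕ)
    (W : V → Measure (ℕ → V)) (hW : IsSRW G d W) (x : V) : ∀ᵐ ω ∂(W x), ω 0 = x := by
  have := hW.1 x
  have h := srw_start G d W hW x x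
  rw [if_pos rfl] at h
  rw [ae_iff]
  have hm : MeasurableSet {ω : ℕ → V | ω 0 = x} :=
    (measurable_pi_apply (0 : ℕ) : Measurable fun ω : ℕ → V => ω 0) (measurableSet_singleton x)
  have := (prob_compl_eq_zero_iff (μ := W x) hm).2 h
  exact this

lemma srwStep_toReal (G : SimpleGraph V) (d : ℕ) (z y : V) :
    (srwStep G d z y).toReal = if G.Adj z y then ((d : ℝ))⁻¹ else 0 := by
  unfold srwStep; split_ifs <;> simp

lemma srwStep_ne_top (G : SimpleGraph V) (d : ℕ) (hd : 3 ≤ d) (z y : V) :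
    srwStep G d z y ≠ ⊤ := by
  unfold srwStep; split_ifs
  · simp; omega
  · simp

lemma srwStep_sum (G : SimpleGraph V) (d : ℕ) (hd : 3 ≤ d) (hreg : IsReg G d) (z : V) :
    ∑ y, srwStep G d z y = 1 := by
  have h : (∑ y, srwStep G d z y).toReal = 1 := by
    rw [ENNReal.toReal_sum (fun y _ => srwStep_ne_top G d hd z y)]
    simp only [srwStep_toReal]
    exact row_sum G d hd hreg z
  have := (ENNReal.toReal_eq_one_iff _).1 h
  exact this

lemma map_shift [MeasurableSingletonClass V] (G : SimpleGraph V) (d : ℕ) (hd : 3 ≤ d)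
    (hreg : IsReg G d) (W : V → Measure (ℕ → V)) (hW : IsSRW G d W) (z : V) :
    (W z).map shiftw = ∑ y, srwStep G d z y • W y := by
  have := hW.1
  have hu : (W z).map shiftw Set.univ = (∑ y, srwStep G d z y • W y) Set.univ := by
    rw [Measure.map_apply shiftw_meas MeasurableSet.univ, Set.preimage_univ, measure_univ,
      Measure.finset_sum_apply]
    simp [srwStep_sum G d hd hreg z]
  haveI : IsFiniteMeasure ((W z).map shiftw) := by
    haveI : IsProbabilityMeasure ((W z).map shiftw) := Measure.isProbabilityMeasure_map shiftw_meas.aemeasurable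
    infer_instance
  refine ext_of_generate_finite (cyls V) cyls_gen cyls_pi ?_ hu
  intro S hS
  have hSm : MeasurableSet S := by
    rw [cyls_gen]; exact MeasurableSpace.measurableSet_generateFrom hS
  rcases hS with rfl | ⟨k, p, rfl⟩
  · simp
  rw [Measure.map_apply shiftw_meas hSm, Measure.finset_sum_apply]
  set q : ℕ → V := fun i => if i = 0 then z else p (i - 1) with hq
  have hae := srw_ae_start G d W hW z
  have e1 : W z (shiftw ⁻¹' {ω | ∀ i ≤ k, ω i = p i}) = W z {ω | ∀ i ≤ k + 1, ω i = q i} := by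
    apply measure_congr
    filter_upwards [hae] with ω hω
    apply propext
    constructor
    · intro h i hi
      rcases Nat.eq_zero_or_pos i with rfl | hi0
      · simp [hq, hω]
      · obtain ⟨j, rfl⟩ : ∃ j, i = j + 1 := ⟨i - 1, by omega⟩
        have := h j (by omega)
        simpa [hq, shiftw] using this
    · intro h i hi
      have := h (i + 1) (by omega)
      simpa [hq, shiftw] using this
  rw [e1, hW.2, Finset.prod_range_succ']
  have hq0 : q 0 = z := by simp [hq]
  have hq1 : ∀ i, q (i + 1) = p i := by intro i; simp [hq]
  simp only [hq0, hq1, if_true, one_mul, Measure.smul_apply, smul_eq_mul, hW.2]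
  rw [Finset.sum_eq_single (p 0)]
  · simp [mul_comm]
  · intro y _ hy
    simp [hy.symm]
  · simp

lemma one_step_set [MeasurableSingletonClass V] (G : SimpleGraph V) (d : ℕ) (hd : 3 ≤ d)
    (hreg : IsReg G d) (W : V → Measure (ℕ → V)) (hW : IsSRW G d W) (z : V)
    (E : Set (ℕ → V)) (hE : MeasurableSet E) :
    (W z (shiftw ⁻¹' E)).toReal = Pop G d (fun y => (W y E).toReal) z := by
  have := hW.1
  rw [← Measure.map_apply shiftw_meas hE, map_shift G d hd hreg W hW, Measure.finset_sum_apply,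
    ENNReal.toReal_sum]
  · simp [Pop, srwStep_toReal]
  · intro y _
    simp only [Measure.smul_apply, smul_eq_mul]
    exact ENNReal.mul_ne_top (srwStep_ne_top G d hd z y) (measure_ne_top _ _)

lemma hit_toNat (A : Set V) (ω : ℕ → V) : (hitTime A ω).toNat = sInf {k | ω k ∈ A} := by
  unfold hitTime
  rcases Set.eq_empty_or_nonempty {k | ω k ∈ A} with h | h
  · rw [h]; simp
  · rw [sInf_image, ← ENat.coe_sInf h, ENat.toNat_coe]

lemma hit_le_iff (A : Set V) (ω : ℕ → V) (k : ℕ) : hitTime A ω ≤ k ↔ ∃ i ≤ k, ω i ∈ A := by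
  unfold hitTime
  rcases Set.eq_empty_or_nonempty {k | ω k ∈ A} with h | h
  · rw [h]
    simp only [Set.image_empty, sInf_empty, top_le_iff, ENat.coe_ne_top, false_iff]
    rintro ⟨i, _, hi⟩
    have : i ∈ {k | ω k ∈ A} := hi
    rw [h] at this; exact this
  · rw [sInf_image, ← ENat.coe_sInf h, Nat.cast_le]
    constructor
    · intro hk; exact ⟨_, hk, Nat.sInf_mem h⟩
    · rintro ⟨i, hi, hA⟩; exact (Nat.sInf_le hA).trans hi

lemma exit_lt_iff (A F : Set V) (ω : ℕ → V) :
    exitTime F ω < hitTime A ω ↔ ∃ k, ω k ∉ F ∧ ∀ i ≤ k, ω i ∉ A := by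
  constructor
  · intro h
    have hne : exitTime F ω ≠ ⊤ := ne_top_of_lt h
    obtain ⟨k, hk⟩ := ENat.ne_top_iff_exists.1 hne
    obtain ⟨i, hi, hiF⟩ := (hit_le_iff Fᶜ ω k).1 (show exitTime F ω ≤ k from hk.symm.le)
    refine ⟨i, hiF, fun j hj hjA => ?_⟩
    have := (hit_le_iff A ω k).2 ⟨j, hj.trans hi, hjA⟩
    rw [← hk] at h
    exact absurd h (not_lt.2 this)
  · rintro ⟨k, hkF, hkA⟩
    have h1 : exitTime F ω ≤ k := (hit_le_iff Fᶜ ω k).2 ⟨k, le_rfl, hkF⟩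
    refine lt_of_le_of_lt h1 ?_
    by_contra h
    obtain ⟨i, hi, hA⟩ := (hit_le_iff A ω k).1 (not_lt.1 h)
    exact hkA i hi hA

lemma msing [MeasurableSingletonClass V] (i : ℕ) (A : Set V) : MeasurableSet {ω : ℕ → V | ω i ∈ A} :=
  measurable_pi_apply i (Set.toFinite A).measurableSet

lemma hit_meas [MeasurableSingletonClass V] (A : Set V) :
    Measurable (fun ω : ℕ → V => (hitTime A ω).toNat) := by
  apply measurable_of_Ioi
  intro k
  have : (fun ω : ℕ → V => (hitTime A ω).toNat) ⁻¹' Set.Ioi k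
      = (⋂ i ∈ {i | i ≤ k}, {ω : ℕ → V | ω i ∈ A}ᶜ) ∩ ⋃ i, {ω : ℕ → V | ω i ∈ A} := by
    ext ω
    simp only [Set.mem_preimage, Set.mem_Ioi, hit_toNat, Set.mem_inter_iff, Set.mem_iInter,
      Set.mem_iUnion, Set.mem_setOf_eq, Set.mem_compl_iff]
    constructor
    · intro h
      refine ⟨fun i hi hA => ?_, ?_⟩
      · have := Nat.sInf_le (s := {k | ω k ∈ A}) hA
        omega
      · by_contra hne
        have : {k | ω k ∈ A} = ∅ := by
          ext i; simp only [Set.mem_setOf_eq, Set.mem_empty_iff_false, iff_false]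
          exact fun hi => hne ⟨i, hi⟩
        rw [this] at h; simp at h
    · rintro ⟨h, hne⟩
      by_contra hlt
      exact h _ (not_lt.1 hlt) (Nat.sInf_mem (s := {k | ω k ∈ A}) hne)
  rw [this]
  exact (MeasurableSet.biInter (Set.to_countable _) (fun i _ => (msing i A).compl)).inter
    (MeasurableSet.iUnion (fun i => msing i A))

lemma exit_meas [MeasurableSingletonClass V] (A F : Set V) :
    MeasurableSet {ω : ℕ → V | exitTime F ω < hitTime A ω} := by
  have : {ω : ℕ → V | exitTime F ω < hitTime A ω}
      = ⋃ k, ({ω : ℕ → V | ω k ∈ F}ᶜ ∩ ⋂ i ∈ {i | i ≤ k}, {ω : ℕ → V | ω i ∈ A}ᶜ) := by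
    ext ω
    simp [exit_lt_iff]
  rw [this]
  exact MeasurableSet.iUnion fun k => (msing k F).compl.inter
    (MeasurableSet.biInter (Set.to_countable _) (fun i _ => (msing i A).compl))

def noHit (A : Set V) (k : ℕ) : Set (ℕ → V) := {ω | ∀ i ≤ k, ω i ∉ A}

lemma noHit_meas [MeasurableSingletonClass V] (A : Set V) (k : ℕ) : MeasurableSet (noHit A k) := by
  have : noHit A k = ⋂ i ∈ {i | i ≤ k}, {ω : ℕ → V | ω i ∈ A}ᶜ := by
    ext ω; simp [noHit]
  rw [this]
  exact MeasurableSet.biInter (Set.to_countable _) (fun i _ => (msing i A).compl)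

lemma exists_g (G : SimpleGraph V) (d : ℕ) (hd : 3 ≤ d) (hreg : IsReg G d)
    (hconn : G.Connected) (A : Set V) (hA : A.Nonempty) :
    ∃ g : V → ℝ, (∀ z ∈ A, g z = 0) ∧ ∀ z, z ∉ A → g z = 1 + Pop G d g z := by
  let Φ : (V → ℝ) →ₗ[ℝ] (V → ℝ) :=
    { toFun := fun f z => if z ∈ A then f z else f z - Pop G d f z
      map_add' := by
        intro f g; funext z
        have := Pop_add G d f g z
        simp only [Pi.add_apply]
        split_ifs
        · rfl
        · have e : (f + g) = fun v => f v + g v := rfl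
          rw [e, this]; ring
      map_smul' := by
        intro c f; funext z
        have := Pop_smul G d c f z
        simp only [Pi.smul_apply, smul_eq_mul, RingHom.id_apply]
        split_ifs
        · rfl
        · have e : (c • f) = fun v => c * f v := rfl
          rw [e, this]; ring }
  have hinj : Function.Injective Φ := by
    rw [injective_iff_map_eq_zero]
    intro f hf
    have hfz : ∀ z, (if z ∈ A then f z else f z - Pop G d f z) = 0 := fun z => congrFun hf z
    have hc := const_of_lap_zero G d hd hreg hconn f (by
      apply Finset.sum_eq_zero
      intro z _
      have := hfz z
      split_ifs at this
      · rw [this, zero_mul]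
      · rw [this, mul_zero])
    obtain ⟨a, ha⟩ := hA
    have := hfz a
    rw [if_pos ha] at this
    funext z
    rw [hc z a, this]; rfl
  obtain ⟨g, hg⟩ := (LinearMap.injective_iff_surjective.1 hinj) (fun z => if z ∈ A then 0 else 1)
  have hgz : ∀ z, (if z ∈ A then g z else g z - Pop G d g z) = if z ∈ A then 0 else 1 := fun z => congrFun hg z
  refine ⟨g, fun z hz => ?_, fun z hz => ?_⟩
  · have := hgz z; rwa [if_pos hz, if_pos hz] at this
  · have := hgz z; rw [if_neg hz, if_neg hz] at this; linarith

lemma noHit_sum [MeasurableSingletonClass V] (G : SimpleGraph V) (d : ℕ) (hd : 3 ≤ d)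
    (hreg : IsReg G d) (hconn : G.Connected) (W : V → Measure (ℕ → V)) (hW : IsSRW G d W)
    (A : Set V) (hA : A.Nonempty) (z : V) : ∑' k, W z (noHit A k) ≠ ⊤ := by
  have := hW.1
  obtain ⟨g, hg0, hg1⟩ := exists_g G d hd hreg hconn A hA
  obtain ⟨M, hM⟩ : ∃ M, ∀ z, |g z| ≤ M :=
    ⟨∑ z, |g z|, fun z => Finset.single_le_sum (f := fun z => |g z|) (fun _ _ => abs_nonneg _) (Finset.mem_univ z)⟩
  set s : ℕ → V → ℝ := fun k z => (W z (noHit A k)).toReal with hs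
  have hsA : ∀ k, ∀ z ∈ A, s k z = 0 := by
    intro k z hz
    have : W z (noHit A k) = 0 := by
      rw [measure_eq_zero_iff_ae_notMem]
      filter_upwards [srw_ae_start G d W hW z] with ω hω h
      exact h 0 (Nat.zero_le _) (hω ▸ hz)
    simp [hs, this]
  have hs0 : ∀ z, z ∉ A → s 0 z = 1 := by
    intro z hz
    have : W z (noHit A 0) = W z Set.univ := by
      apply measure_congr
      filter_upwards [srw_ae_start G d W hW z] with ω hω
      apply propext
      refine ⟨fun _ => trivial, fun _ i hi => ?_⟩
      rw [Nat.le_zero.1 hi, hω]; exact hz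
    simp only [hs, this, measure_univ]; simp
  have hs1 : ∀ k z, z ∉ A → s (k + 1) z = Pop G d (s k) z := by
    intro k z hz
    have : W z (noHit A (k + 1)) = W z (shiftw ⁻¹' noHit A k) := by
      apply measure_congr
      filter_upwards [srw_ae_start G d W hW z] with ω hω
      apply propext
      constructor
      · intro h i hi
        exact h (i + 1) (by omega)
      · intro h i hi
        rcases Nat.eq_zero_or_pos i with rfl | hi0
        · rw [hω]; exact hz
        · obtain ⟨j, rfl⟩ : ∃ j, i = j + 1 := ⟨i - 1, by omega⟩
          exact h j (by omega)
    simp only [hs, this]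
    exact one_step_set G d hd hreg W hW z _ (noHit_meas A k)
  have key : ∀ K z, |g z - ∑ k ∈ Finset.range K, s k z| ≤ M := by
    intro K
    induction K with
    | zero => intro z; simpa using hM z
    | succ K ih =>
      intro z
      by_cases hz : z ∈ A
      · rw [hg0 z hz, Finset.sum_eq_zero (fun k _ => hsA k z hz)]
        simpa using (abs_nonneg _).trans (hM z)
      · have e : g z - ∑ k ∈ Finset.range (K + 1), s k z
            = Pop G d (fun y => g y - ∑ k ∈ Finset.range K, s k y) z := by
          rw [Pop_sub, Finset.sum_range_succ', hs0 z hz, hg1 z hz]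
          have : Pop G d (fun y => ∑ k ∈ Finset.range K, s k y) z
              = ∑ k ∈ Finset.range K, s (k + 1) z := by
            simp only [hs1 _ z hz, Pop, Finset.mul_sum]
            exact Finset.sum_comm
          rw [this]; ring
        rw [e, abs_le]
        constructor
        · have := Pop_mono_adj G d (fun _ => -M) (fun y => g y - ∑ k ∈ Finset.range K, s k y) z
            (fun y _ => (abs_le.1 (ih y)).1)
          rwa [Pop_const G d hd hreg] at this
        · have := Pop_mono_adj G d (fun y => g y - ∑ k ∈ Finset.range K, s k y) (fun _ => M) z
            (fun y _ => (abs_le.1 (ih y)).2)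
          rwa [Pop_const G d hd hreg] at this
  have hle : ∑' k, W z (noHit A k) ≤ ENNReal.ofReal (2 * M) := by
    apply ENNReal.tsum_le_of_sum_range_le
    intro K
    have h1 : ∑ k ∈ Finset.range K, W z (noHit A k)
        = ENNReal.ofReal (∑ k ∈ Finset.range K, s k z) := by
      rw [ENNReal.ofReal_sum_of_nonneg (fun k _ => ENNReal.toReal_nonneg)]
      refine Finset.sum_congr rfl fun k _ => ?_
      exact (ENNReal.ofReal_toReal (measure_ne_top _ _)).symm
    rw [h1]
    apply ENNReal.ofReal_le_ofReal
    have h2 := (abs_le.1 (key K z)).1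
    have h3 := (abs_le.1 (hM z)).2
    linarith
  exact ne_top_of_le_ne_top ENNReal.ofReal_ne_top hle

lemma hit_integrable [MeasurableSingletonClass V] (G : SimpleGraph V) (d : ℕ) (hd : 3 ≤ d)
    (hreg : IsReg G d) (hconn : G.Connected) (W : V → Measure (ℕ → V)) (hW : IsSRW G d W)
    (A : Set V) (hA : A.Nonempty) (z : V) :
    Integrable (fun ω => ((hitTime A ω).toNat : ℝ)) (W z) := by
  have hm : Measurable (fun ω : ℕ → V => ((hitTime A ω).toNat : ℝ)) :=
    measurable_from_top.comp (hit_meas A)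
  refine ⟨hm.aestronglyMeasurable, ?_⟩
  rw [hasFiniteIntegral_iff_enorm]
  have hpt : ∀ ω : ℕ → V, ‖((hitTime A ω).toNat : ℝ)‖ₑ ≤ ∑' k, (noHit A k).indicator (fun _ => (1 : ℝ≥0∞)) ω := by
    intro ω
    have e : ‖((hitTime A ω).toNat : ℝ)‖ₑ = ((hitTime A ω).toNat : ℝ≥0∞) := by
      rw [Real.enorm_eq_ofReal (by positivity), ENNReal.ofReal_natCast]
    rw [e]
    set n := (hitTime A ω).toNat with hn
    calc (n : ℝ≥0∞) = ∑ k ∈ Finset.range n, (noHit A k).indicator (fun _ => (1 : ℝ≥0∞)) ω := by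
          have : ∀ k ∈ Finset.range n, (noHit A k).indicator (fun _ => (1 : ℝ≥0∞)) ω = 1 := by
            intro k hk
            apply Set.indicator_of_mem
            intro i hi hiA
            rw [Finset.mem_range, hn, hit_toNat] at hk
            have := Nat.sInf_le (s := {k | ω k ∈ A}) hiA
            omega
          rw [Finset.sum_congr rfl this]; simp
      _ ≤ _ := ENNReal.sum_le_tsum _
  refine lt_of_le_of_lt (lintegral_mono hpt) ?_
  rw [lintegral_tsum (fun k => (measurable_const.indicator (noHit_meas A k)).aemeasurable)]
  have : ∀ k, ∫⁻ ω, (noHit A k).indicator (fun _ => (1 : ℝ≥0∞)) ω ∂(W z) = W z (noHit A k) := by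
    intro k
    rw [lintegral_indicator (noHit_meas A k)]; simp
  simp only [this]
  exact lt_top_iff_ne_top.2 (noHit_sum G d hd hreg hconn W hW A hA z)

lemma hit_ae [MeasurableSingletonClass V] (G : SimpleGraph V) (d : ℕ) (hd : 3 ≤ d)
    (hreg : IsReg G d) (hconn : G.Connected) (W : V → Measure (ℕ → V)) (hW : IsSRW G d W)
    (A : Set V) (hA : A.Nonempty) (z : V) : ∀ᵐ ω ∂(W z), ∃ k, ω k ∈ A := by
  rw [ae_iff]
  by_contra hne
  apply noHit_sum G d hd hreg hconn W hW A hA z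
  rw [eq_top_iff, ← ENNReal.tsum_const_eq_top_of_ne_zero (α := ℕ) hne]
  apply ENNReal.tsum_le_tsum
  intro k
  apply measure_mono
  intro ω hω i _ hi
  exact hω ⟨i, hi⟩

lemma hit_rec [MeasurableSingletonClass V] (G : SimpleGraph V) (d : ℕ) (hd : 3 ≤ d)
    (hreg : IsReg G d) (hconn : G.Connected) (W : V → Measure (ℕ → V)) (hW : IsSRW G d W)
    (A : Set V) (hA : A.Nonempty) (z : V) (hz : z ∉ A) :
    ∫ ω, ((hitTime A ω).toNat : ℝ) ∂(W z)
      = 1 + Pop G d (fun y => ∫ ω, ((hitTime A ω).toNat : ℝ) ∂(W y)) z := by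
  have := hW.1
  have hm : Measurable (fun ω : ℕ → V => ((hitTime A ω).toNat : ℝ)) :=
    measurable_from_top.comp (hit_meas A)
  have hint := fun y => hit_integrable G d hd hreg hconn W hW A hA y
  have e1 : ∫ ω, ((hitTime A ω).toNat : ℝ) ∂(W z)
      = ∫ ω, (1 + ((hitTime A (shiftw ω)).toNat : ℝ)) ∂(W z) := by
    apply integral_congr_ae
    filter_upwards [srw_ae_start G d W hW z, hit_ae G d hd hreg hconn W hW A hA z] with ω hω hex
    have h0 : ω 0 ∉ A := by rw [hω]; exact hz
    have : (hitTime A ω).toNat = 1 + (hitTime A (shiftw ω)).toNat := by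
      rw [hit_toNat, hit_toNat]
      have hmem := Nat.sInf_mem (s := {k | ω k ∈ A}) hex
      set n := sInf {k | ω k ∈ A} with hn
      have hn0 : n ≠ 0 := by intro h; rw [h] at hmem; exact h0 hmem
      obtain ⟨j, hj⟩ : ∃ j, n = j + 1 := ⟨n - 1, by omega⟩
      have hjm : j ∈ {k | shiftw ω k ∈ A} := by
        rw [hj] at hmem; exact hmem
      have h1 := Nat.sInf_le hjm
      have h2 : sInf {k | shiftw ω k ∈ A} ∈ {k | shiftw ω k ∈ A} := Nat.sInf_mem ⟨j, hjm⟩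
      have h3 : n ≤ sInf {k | shiftw ω k ∈ A} + 1 := Nat.sInf_le (s := {k | ω k ∈ A}) h2
      omega
    simp only [this]; push_cast; rfl
  have hint' : Integrable (fun ω => ((hitTime A ω).toNat : ℝ)) ((W z).map shiftw) := by
    rw [map_shift G d hd hreg W hW, integrable_finset_sum_measure]
    intro y _
    exact (hint y).smul_measure (srwStep_ne_top G d hd z y)
  have hint2 : Integrable (fun ω => ((hitTime A (shiftw ω)).toNat : ℝ)) (W z) :=
    hint'.comp_measurable shiftw_meas
  rw [e1, integral_add (integrable_const _) hint2]
  have e2 : ∫ ω, ((hitTime A (shiftw ω)).toNat : ℝ) ∂(W z)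
      = ∫ ω, ((hitTime A ω).toNat : ℝ) ∂((W z).map shiftw) :=
    (integral_map shiftw_meas.aemeasurable hm.aestronglyMeasurable).symm
  rw [e2, map_shift G d hd hreg W hW, integral_finset_sum_measure]
  · simp [Pop, integral_smul_measure, srwStep_toReal]
  · intro y _
    exact (hint y).smul_measure (srwStep_ne_top G d hd z y)

lemma hit_zero [MeasurableSingletonClass V] (G : SimpleGraph V) (d : ℕ)
    (W : V → Measure (ℕ → V)) (hW : IsSRW G d W) (A : Set V) (z : V) (hz : z ∈ A) :
    ∫ ω, ((hitTime A ω).toNat : ℝ) ∂(W z) = 0 := by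
  have : (fun ω : ℕ → V => ((hitTime A ω).toNat : ℝ)) =ᵐ[W z] fun _ => 0 := by
    filter_upwards [srw_ae_start G d W hW z] with ω hω
    rw [hit_toNat]
    have : sInf {k | ω k ∈ A} ≤ 0 := Nat.sInf_le (s := {k | ω k ∈ A}) (show ω 0 ∈ A by rw [hω]; exact hz)
    have : sInf {k | ω k ∈ A} = 0 := by omega
    rw [this]; simp
  rw [integral_congr_ae this]; simp

lemma exit_zero [MeasurableSingletonClass V] (G : SimpleGraph V) (d : ℕ)
    (W : V → Measure (ℕ → V)) (hW : IsSRW G d W) (A F : Set V) (z : V) (hz : z ∈ A) :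
    (W z {ω | exitTime F ω < hitTime A ω}).toReal = 0 := by
  have : W z {ω | exitTime F ω < hitTime A ω} = 0 := by
    rw [measure_eq_zero_iff_ae_notMem]
    filter_upwards [srw_ae_start G d W hW z] with ω hω h
    obtain ⟨k, _, hk⟩ := (exit_lt_iff A F ω).1 h
    exact hk 0 (Nat.zero_le _) (by rw [hω]; exact hz)
  rw [this]; simp

lemma exit_one [MeasurableSingletonClass V] (G : SimpleGraph V) (d : ℕ)
    (W : V → Measure (ℕ → V)) (hW : IsSRW G d W) (A F : Set V) (z : V) (hz : z ∉ A) (hzF : z ∉ F) :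
    (W z {ω | exitTime F ω < hitTime A ω}).toReal = 1 := by
  have := hW.1
  have : W z {ω | exitTime F ω < hitTime A ω} = W z Set.univ := by
    apply measure_congr
    filter_upwards [srw_ae_start G d W hW z] with ω hω
    apply propext
    refine ⟨fun _ => trivial, fun _ => (exit_lt_iff A F ω).2 ⟨0, ?_, ?_⟩⟩
    · rw [hω]; exact hzF
    · intro i hi; rw [Nat.le_zero.1 hi, hω]; exact hz
  rw [this, measure_univ]; simp

lemma exit_rec [MeasurableSingletonClass V] (G : SimpleGraph V) (d : ℕ) (hd : 3 ≤ d)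
    (hreg : IsReg G d) (W : V → Measure (ℕ → V)) (hW : IsSRW G d W) (A F : Set V) (z : V)
    (hz : z ∉ A) (hzF : z ∈ F) :
    (W z {ω | exitTime F ω < hitTime A ω}).toReal
      = Pop G d (fun y => (W y {ω | exitTime F ω < hitTime A ω}).toReal) z := by
  rw [← one_step_set G d hd hreg W hW z _ (exit_meas A F)]
  congr 1
  apply measure_congr
  filter_upwards [srw_ae_start G d W hW z] with ω hω
  apply propext
  change exitTime F ω < hitTime A ω ↔ exitTime F (shiftw ω) < hitTime A (shiftw ω)
  rw [exit_lt_iff, exit_lt_iff]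
  constructor
  · rintro ⟨k, hkF, hkA⟩
    have hk0 : k ≠ 0 := by rintro rfl; rw [hω] at hkF; exact hkF hzF
    obtain ⟨j, rfl⟩ : ∃ j, k = j + 1 := ⟨k - 1, by omega⟩
    exact ⟨j, hkF, fun i hi => hkA (i + 1) (by omega)⟩
  · rintro ⟨k, hkF, hkA⟩
    refine ⟨k + 1, hkF, fun i hi => ?_⟩
    rcases Nat.eq_zero_or_pos i with rfl | hi0
    · rw [hω]; exact hz
    · obtain ⟨j, rfl⟩ : ∃ j, i = j + 1 := ⟨i - 1, by omega⟩
      exact hkA j (by omega)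

end prob
end GFF
namespace GFF

lemma ev_pow_exp (k : ℕ) (c : ℝ) (hc : 0 < c) : ∀ᶠ t : ℝ in atTop, t ^ k ≤ Real.exp (c * t) := by
  have h := (isLittleO_pow_exp_pos_mul_atTop k hc).bound (zero_lt_one)
  filter_upwards [h, eventually_ge_atTop 0] with t ht h0
  rw [one_mul, Real.norm_of_nonneg (pow_nonneg h0 k), Real.norm_of_nonneg (Real.exp_pos _).le] at ht
  exact ht

lemma inv_pow_le_exp (q : ℝ) (hq : 1 < q) (k : ℕ) (u : ℝ) (hu : u ≤ k) :
    (q⁻¹) ^ k ≤ Real.exp (-(u * Real.log q)) := by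
  have hL : 0 < Real.log q := Real.log_pos hq
  have : (q⁻¹) ^ k = Real.exp (-(k * Real.log q)) := by
    rw [Real.exp_neg, mul_comm, Real.exp_mul, Real.exp_log (by linarith), Real.rpow_natCast, inv_pow]
  rw [this]
  apply Real.exp_le_exp.2
  have := mul_le_mul_of_nonneg_right hu hL.le
  linarith

lemma analytic (d : ℕ) (hd : 3 ≤ d) (α β b : ℝ) (hα : 0 < α ∧ α ≤ 1) (hβ : 0 < β ∧ β ≤ 2)
    (hb : 0 < b) : ∃ (N0 : ℕ) (C : ℝ), 0 < C ∧ ∀ N : ℕ, N0 ≤ N → ∀ a : ℝ, 0 ≤ a →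
      a ≤ b * Real.log N →
      1 ≤ ⌊α * Real.logb ((d : ℝ) - 1) (N : ℝ)⌋₊ ∧ 2 * a ≤ N ∧
      4 * a * ((⌊α * Real.logb ((d : ℝ) - 1) (N : ℝ)⌋₊ : ℝ) / N
        + (8 * (((d : ℝ) - 1)⁻¹) ^ (sn d N + 1)
          + 4 * (⌊α * Real.logb ((d : ℝ) - 1) (N : ℝ)⌋₊ : ℝ)
            * (((d : ℝ) - 1)⁻¹) ^ (⌊α * Real.logb ((d : ℝ) - 1) (N : ℝ)⌋₊ - 1)
          + Real.sqrt ((1 - β / 2) ^ ⌊α * Real.logb ((d : ℝ) - 1) (N : ℝ)⌋₊) / β)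
        + 4 * Real.sqrt N / β / N) ≤ C / Real.log N ^ 3 := by
  have hd' : (3 : ℝ) ≤ d := by exact_mod_cast hd
  obtain ⟨q, hq⟩ : ∃ q : ℝ, q = (d : ℝ) - 1 := ⟨_, rfl⟩
  have hq2 : 1 < q := by linarith
  set L := Real.log q with hLdef
  have hL : 0 < L := Real.log_pos hq2
  have hγ : 0 < β * α / (4 * L) := by have := hβ.1; have := hα.1; positivity
  have hev : ∀ᶠ t : ℝ in atTop, t ^ 5 ≤ Real.exp (1 * t) ∧ t ^ 5 ≤ Real.exp (α * t) ∧
      t ^ 4 ≤ Real.exp (β * α / (4 * L) * t) ∧ t ^ 4 ≤ Real.exp (1 / 2 * t) ∧ 1 ≤ t ∧ L / α ≤ t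
      ∧ t ^ 2 ≤ Real.exp (1 * t) ∧ 2 * b ≤ t := by
    filter_upwards [ev_pow_exp 5 1 one_pos, ev_pow_exp 5 α hα.1, ev_pow_exp 4 _ hγ,
      ev_pow_exp 4 (1/2) (by norm_num), eventually_ge_atTop 1, eventually_ge_atTop (L / α),
      ev_pow_exp 2 1 one_pos, eventually_ge_atTop (2 * b)] with t h1 h2 h3 h4 h5 h6 h7 h8
    exact ⟨h1, h2, h3, h4, h5, h6, h7, h8⟩
  have hev2 := (Real.tendsto_log_atTop.comp tendsto_natCast_atTop_atTop).eventually hev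
  obtain ⟨N0, hN0⟩ := eventually_atTop.1 hev2
  refine ⟨N0, 4 * b * (1 / L + (8 * L ^ 8 + 4 * q ^ 2 / L + Real.exp (β / 4) / β) + 4 / β), ?_, ?_⟩
  · have := hβ.1; positivity
  intro N hN a ha0 ha
  obtain ⟨e1, e2, e3, e4, e5, e6, e7, e8⟩ := hN0 N hN
  simp only [Function.comp] at e1 e2 e3 e4 e5 e6 e7 e8
  set t := Real.log (N : ℝ) with ht
  have hNpos : (0 : ℝ) < N := by
    rcases Nat.eq_zero_or_pos N with h | h
    · rw [h] at ht; simp at ht; linarith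
    · exact_mod_cast h
  have hNe : (N : ℝ) = Real.exp t := (Real.exp_log hNpos).symm
  have hlogb : Real.logb ((d : ℝ) - 1) (N : ℝ) = t / L := by rw [← hq]; rfl
  rw [hlogb, ← hq]
  have ht0 : 0 < t := by linarith
  have hR1 : (1 : ℝ) ≤ α * (t / L) := by
    rw [div_le_iff₀ hα.1] at e6
    rw [← mul_div_assoc, le_div_iff₀ hL]; linarith
  set R := ⌊α * (t / L)⌋₊ with hR
  have hR' : 1 ≤ R := Nat.le_floor (by simpa using hR1)
  have hRle : (R : ℝ) ≤ t / L := by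
    refine (Nat.floor_le (by linarith)).trans ?_
    have : 0 ≤ t / L := by positivity
    nlinarith [hα.2]
  have hRge : α * (t / L) - 1 ≤ (R : ℝ) := by
    have := Nat.lt_floor_add_one (α * (t / L)); linarith
  refine ⟨hR', ?_, ?_⟩
  · rw [hNe]; rw [one_mul] at e7
    nlinarith
  have T1 : (R : ℝ) / N ≤ (1 / L) / t ^ 4 := by
    rw [hNe, div_le_div_iff₀ (Real.exp_pos _) (by positivity)]
    rw [one_mul] at e1
    calc (R : ℝ) * t ^ 4 ≤ t / L * t ^ 4 := by gcongr
      _ = 1 / L * t ^ 5 := by ring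
      _ ≤ _ := by gcongr
  have T2 : 8 * (q⁻¹) ^ (sn d N + 1) ≤ (8 * L ^ 8) / t ^ 4 := by
    have h1 : 8 * Real.logb q (t / L) ≤ ((sn d N + 1 : ℕ) : ℝ) := by
      have h2 := Nat.lt_floor_add_one ((8 : ℝ) * Real.logb q (t / L))
      have h3 : ⌊(8 : ℝ) * Real.logb q (t / L)⌋₊ ≤ sn d N := by
        unfold sn; rw [hlogb, ← hq]; exact le_max_right _ _
      have h4 : (⌊(8 : ℝ) * Real.logb q (t / L)⌋₊ : ℝ) ≤ sn d N := by exact_mod_cast h3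
      push_cast; linarith
    have h5 := inv_pow_le_exp q hq2 _ _ h1
    have h6 : Real.exp (-(8 * Real.logb q (t / L) * Real.log q)) = (t / L)⁻¹ ^ 8 := by
      have : 8 * Real.logb q (t / L) * Real.log q = Real.log (t / L) * (8 : ℕ) := by
        unfold Real.logb; push_cast
        rw [mul_assoc, div_mul_cancel₀ _ hL.ne']; ring
      rw [this, Real.exp_neg, Real.exp_mul, Real.exp_log (by positivity), Real.rpow_natCast, inv_pow]
    rw [h6] at h5
    calc 8 * (q⁻¹) ^ (sn d N + 1) ≤ 8 * (t / L)⁻¹ ^ 8 := by gcongr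
      _ = (8 * L ^ 8) / t ^ 8 := by rw [inv_div, div_pow]; ring
      _ ≤ _ := by
        gcongr
        norm_num
  have T3 : 4 * (R : ℝ) * (q⁻¹) ^ (R - 1) ≤ (4 * q ^ 2 / L) / t ^ 4 := by
    have h1 : α * (t / L) - 2 ≤ ((R - 1 : ℕ) : ℝ) := by
      rw [Nat.cast_sub hR']; push_cast; linarith
    have h2 := inv_pow_le_exp q hq2 _ _ h1
    have h3 : Real.exp (-((α * (t / L) - 2) * Real.log q)) = q ^ 2 / Real.exp (α * t) := by
      have : -((α * (t / L) - 2) * Real.log q) = Real.log q * (2 : ℕ) - α * t := by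
        rw [← hLdef]; push_cast; field_simp; ring
      rw [this, Real.exp_sub, Real.exp_mul, Real.exp_log (by linarith), Real.rpow_natCast]
    rw [h3] at h2
    calc 4 * (R : ℝ) * (q⁻¹) ^ (R - 1) ≤ 4 * (t / L) * (q ^ 2 / Real.exp (α * t)) := by gcongr
      _ = (4 * q ^ 2 / L) * (t / Real.exp (α * t)) := by ring
      _ ≤ (4 * q ^ 2 / L) * (1 / t ^ 4) := by
        gcongr ?_ * ?_
        rw [div_le_div_iff₀ (Real.exp_pos _) (by positivity)]
        nlinarith [e2]
      _ = _ := by ring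
  have T4 : Real.sqrt ((1 - β / 2) ^ R) / β ≤ (Real.exp (β / 4) / β) / t ^ 4 := by
    have h1 : (1 - β / 2) ^ R ≤ Real.exp (-(β / 4) * R) ^ 2 := by
      have h2 : 1 - β / 2 ≤ Real.exp (-(β / 2)) := by
        have := Real.add_one_le_exp (-(β / 2)); linarith
      calc (1 - β / 2) ^ R ≤ Real.exp (-(β / 2)) ^ R := by
            apply pow_le_pow_left₀ _ h2; linarith [hβ.2]
        _ = _ := by
          rw [← Real.exp_nat_mul, ← Real.exp_nat_mul]; congr 1; push_cast; ring
    have h3 : Real.sqrt ((1 - β / 2) ^ R) ≤ Real.exp (-(β / 4) * R) :=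
      Real.sqrt_le_iff.2 ⟨(Real.exp_pos _).le, h1⟩
    have h4 : Real.exp (-(β / 4) * R) ≤ Real.exp (β / 4) / Real.exp (β * α / (4 * L) * t) := by
      rw [← Real.exp_sub]
      apply Real.exp_le_exp.2
      have h5 : β * α / (4 * L) * t = β / 4 * (α * (t / L)) := by field_simp; try ring
      rw [h5]
      have := mul_le_mul_of_nonneg_left hRge (by linarith [hβ.1] : 0 ≤ β / 4)
      linarith
    have h6 : Real.exp (β / 4) / Real.exp (β * α / (4 * L) * t) ≤ Real.exp (β / 4) / t ^ 4 := by
      gcongr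
    have hβ0 := hβ.1
    calc Real.sqrt ((1 - β / 2) ^ R) / β ≤ (Real.exp (β / 4) / t ^ 4) / β := by
          gcongr; exact h3.trans (h4.trans h6)
      _ = _ := by ring
  have T5 : 4 * Real.sqrt N / β / N ≤ (4 / β) / t ^ 4 := by
    have h1 : Real.sqrt N / N = 1 / Real.exp (1 / 2 * t) := by
      have h2 : Real.exp (1 / 2 * t) = Real.sqrt N := by
        rw [hNe, Real.sqrt_eq_rpow, ← Real.exp_mul]; congr 1; ring
      rw [h2, Real.sqrt_div_self, one_div]
    have hβ0 := hβ.1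
    calc 4 * Real.sqrt N / β / N = 4 / β * (Real.sqrt N / N) := by ring
      _ ≤ 4 / β * (1 / t ^ 4) := by rw [h1]; gcongr
      _ = _ := by ring
  have hβ0 := hβ.1
  have hK : 0 ≤ 1 / L + (8 * L ^ 8 + 4 * q ^ 2 / L + Real.exp (β / 4) / β) + 4 / β := by positivity
  calc _ ≤ 4 * a * ((1 / L) / t ^ 4 + ((8 * L ^ 8) / t ^ 4 + (4 * q ^ 2 / L) / t ^ 4
        + (Real.exp (β / 4) / β) / t ^ 4) + (4 / β) / t ^ 4) := by gcongr
    _ = a * (4 * (1 / L + (8 * L ^ 8 + 4 * q ^ 2 / L + Real.exp (β / 4) / β) + 4 / β) / t ^ 4) := by ring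
    _ ≤ (b * t) * (4 * (1 / L + (8 * L ^ 8 + 4 * q ^ 2 / L + Real.exp (β / 4) / β) + 4 / β) / t ^ 4) := by
      gcongr
    _ = _ := by field_simp

end GFF
/-- comparison of the normalized expected hitting time with the escape
probability at a good vertex. -/
theorem good_vertex_hitting_time_ratio
    (d : ℕ) (hd : 3 ≤ d)
    (V : ℕ → Type) [∀ n, Fintype (V n)] [∀ n, MeasurableSpace (V n)]
    (G : ∀ n, SimpleGraph (V n)) (N : ℕ → ℕ) (α β : ℝ)
    (hα : 0 < α ∧ α ≤ 1) (hβ : 0 < β ∧ β ≤ 2)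
    (hNmono : StrictMono N) (hNpos : ∀ n, 1 ≤ N n)
    (hcard : ∀ n, Nat.card (V n) = N n)
    (hconn : ∀ n, (G n).Connected)
    (hreg : ∀ n, GFF.IsReg (G n) d)
    (hcyc : ∀ n (x : V n),
      GFF.adjPairs (G n) (GFF.gball (G n) x ⌊α * Real.logb ((d : ℝ) - 1) (N n : ℝ)⌋₊) ≤
        2 * (GFF.gball (G n) x ⌊α * Real.logb ((d : ℝ) - 1) (N n : ℝ)⌋₊).ncard)
    (hgap : ∀ n, GFF.SpectralGapLB (G n) d β)
    (W : ∀ n, V n → Measure (ℕ → V n))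
    (hW : ∀ n, GFF.IsSRW (G n) d (W n))
    (b : ℝ) (hb : 0 < b) :
    ∃ c : ℝ, 0 < c ∧
      ∀ (n : ℕ) (A : Set (V n)) (x : V n),
        A.Nonempty → (A.ncard : ℝ) ≤ b * Real.log (N n) →
        GFF.GoodVertex (G n) A (GFF.sn d (N n)) x →
        |(∫ p, ((GFF.hitTime A p).toNat : ℝ) ∂ W n x) /
              ((N n : ℝ)⁻¹ * ∑ z : V n, ∫ p, ((GFF.hitTime A p).toNat : ℝ) ∂ W n z) -
            (W n x {ω | GFF.exitTime (GFF.Fset (G n) A (GFF.sn d (N n)) x) ω <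
              GFF.hitTime A ω}).toReal| ≤
          c / Real.log (N n) ^ 3 := by
  have hcardF : ∀ n, Fintype.card (V n) = N n := fun n => by rw [← hcard n, Nat.card_eq_fintype_card]
  have hlog : ∀ n, 0 < Real.log (N n) := by
    intro n
    apply Real.log_pos
    have hne : Nonempty (V n) := (hconn n).nonempty
    obtain ⟨v⟩ := hne
    have h1 := hreg n v
    have h2 : Nat.card ((G n).neighborSet v) ≤ Nat.card (V n) :=
      Nat.card_le_card_of_injective _ Subtype.val_injective
    rw [h1, hcard n] at h2
    have : 1 < N n := by omega
    exact_mod_cast this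
  obtain ⟨N0, C, hC, hmain⟩ := GFF.analytic d hd α β b hα hβ hb
  set D : ∀ (n : ℕ) (A : Set (V n)) (x : V n), ℝ := fun n A x =>
        |(∫ p, ((GFF.hitTime A p).toNat : ℝ) ∂ W n x) /
              ((N n : ℝ)⁻¹ * ∑ z : V n, ∫ p, ((GFF.hitTime A p).toNat : ℝ) ∂ W n z) -
            (W n x {ω | GFF.exitTime (GFF.Fset (G n) A (GFF.sn d (N n)) x) ω <
              GFF.hitTime A ω}).toReal| with hD
  have hD0 : ∀ n A x, 0 ≤ D n A x := fun n A x => abs_nonneg _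
  set S : ℕ → ℝ := fun n => ∑ A : Set (V n), ∑ x : V n, D n A x * Real.log (N n) ^ 3 with hS
  have hS0 : ∀ n, 0 ≤ S n := fun n => Finset.sum_nonneg fun A _ => Finset.sum_nonneg fun x _ =>
    mul_nonneg (hD0 n A x) (pow_nonneg (hlog n).le 3)
  have hT0 : 0 ≤ ∑ n ∈ Finset.range N0, S n := Finset.sum_nonneg fun n _ => hS0 n
  refine ⟨C + ∑ n ∈ Finset.range N0, S n, by linarith, ?_⟩
  intro n A x hA hAb hx
  change D n A x ≤ _
  have hl3 : 0 < Real.log (N n) ^ 3 := pow_pos (hlog n) 3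
  rcases lt_or_ge n N0 with hn | hn
  · rw [le_div_iff₀ hl3]
    have h1 : D n A x * Real.log (N n) ^ 3 ≤ ∑ x : V n, D n A x * Real.log (N n) ^ 3 :=
      Finset.single_le_sum (f := fun x => D n A x * Real.log (N n) ^ 3)
        (fun x _ => mul_nonneg (hD0 n A x) hl3.le) (Finset.mem_univ x)
    have h2 : ∑ x : V n, D n A x * Real.log (N n) ^ 3 ≤ S n :=
      Finset.single_le_sum (f := fun A => ∑ x : V n, D n A x * Real.log (N n) ^ 3)
        (fun A _ => Finset.sum_nonneg fun x _ => mul_nonneg (hD0 n A x) hl3.le) (Finset.mem_univ A)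
    have h3 : S n ≤ ∑ n ∈ Finset.range N0, S n :=
      Finset.single_le_sum (f := S) (fun n _ => hS0 n) (Finset.mem_range.2 hn)
    linarith
  · have hnN : N0 ≤ N n := hn.trans hNmono.le_apply
    obtain ⟨hR, h2A, hbound⟩ := hmain (N n) hnN A.ncard (Nat.cast_nonneg _) hAb
    have := GFF.srw_discrete (G n) d (W n) (hW n)
    have key := GFF.core (G n) d hd (hreg n) (hconn n) β hβ (hgap n) _ hR (hcyc n) A hA
      (fun z => ∫ p, ((GFF.hitTime A p).toNat : ℝ) ∂ W n z)
      (fun z => (W n z {ω | GFF.exitTime (GFF.Fset (G n) A (GFF.sn d (N n)) x) ω <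
              GFF.hitTime A ω}).toReal)
      (fun z => integral_nonneg fun p => Nat.cast_nonneg _)
      (fun z hz => GFF.hit_zero (G n) d (W n) (hW n) A z hz)
      (fun z hz => GFF.hit_rec (G n) d hd (hreg n) (hconn n) (W n) (hW n) A hA z hz)
      (GFF.sn d (N n)) (le_max_left _ _) x hx
      (fun z hz => GFF.exit_zero (G n) d (W n) (hW n) A _ z hz)
      (fun z hz hzF => GFF.exit_one (G n) d (W n) (hW n) A _ z hz hzF)
      (fun z hz => GFF.exit_rec (G n) d hd (hreg n) (W n) (hW n) A _ z
        (by obtain ⟨p, hp⟩ := hz; exact (hp z p.end_mem_support).2) hz)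
      (by rw [hcardF n]; exact_mod_cast h2A)
    rw [hcardF n] at key
    refine key.trans (hbound.trans ?_)
    gcongr
    linarith
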